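/- arXiv:2405.08753 — 8 statements merged into one kernel-verified Lean document; each statement's English description precedes it below -/
import Mathlib

section
/- Let d ≥ 5 and for μ ∈ [0,1] set G_μ(x) := Σ_{n=1}^∞ μ^n φ_n(x). Then: (a) for every μ ∈ [0,1), the function G_μ is continuous with ‖G_μ‖ ≤ C μ/(1−μ) for some constant C = C(d); and (b) there is a constant C = C(d) < ∞ such that for every continuous rotationally invariant function ρ : ℝ^d → ℝ with |ρ(x)| ≤ (1+|x|)^{−d−4} for all x and ∫_{ℝ^d} ρ(x) dx = 0, one has ‖ρ⋆G_μ‖ ≤ C μ for all μ ∈ [0,1]. -/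
/-!
Each `φ_n` with `n ≥ 1` has norm bounded by one constant, so a mixture `∑ aₙ φ_n` with `aₙ ≥ 0` has
norm at most `C ∑ aₙ` (`mixture_bound`). With `aₙ = μⁿ` this is part (a).

For part (b), expand `φ_n(x - y)` to second order in `y` and integrate against `ρ(y)`. The constant
term vanishes since `ρ` has mean zero, the linear term since `ρ` is even (`integral_rho_inner`), and
by isotropy of the second moments (`integral_rho_inner_sq`) the quadratic term is a bounded multiple
of `∂ₜφ_n(x)` at time `n`, by the heat equation.

*Remainders.* Derivatives of `φ_t` are bounded by negative powers of the parabolic bracket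
`√(t + |x|²)` (`gaussK_le`), and summing such powers over `t = n` loses two powers
(`summable_brk`). For `|y| ≤ |x|/2` the third-derivative bound applies, for larger `y` the terms of
the expansion are bounded one by one, and the decay of `ρ` compensates. In total the remainders
contribute at most `C μ (1 + |x|²)^{-(d+1)/2}` (`remainder_bound`), a function of finite norm.

*Main term.* Summing the `L¹` norms of `∂ₜφ_n`, which are of order `1/n`, would cost a logarithm
as `μ → 1`. Instead `∂ₜφ_n` is replaced by `φ_{n+1} - φ_n`, with an error of the same kind as
above (`gaussK_time_diff_le`), and summation by parts bounds `|∑ μⁿ (φ_{n+1} - φ_n)|` by a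
Gaussian mixture of total mass at most `2μ` (`abs_tsum_diff_le`, `abelWeight_hasSum`), to which
`mixture_bound` applies again.
-/

open scoped ENNReal
open MeasureTheory

/-- The Gaussian density `φ_t(x) = (2πt)^{−d/2} exp(−|x|²/(2t))`. -/
noncomputable def gaussK (d : ℕ) (t : ℝ) (x : EuclideanSpace ℝ (Fin d)) : ℝ :=
  (2 * Real.pi * t) ^ (-(d : ℝ) / 2) * Real.exp (-‖x‖ ^ 2 / (2 * t))

/-- The geometrically weighted Green function `G_μ(x) = Σ_{n≥1} μ^n φ_n(x)`. -/
noncomputable def Gmu (d : ℕ) (μ : ℝ) (x : EuclideanSpace ℝ (Fin d)) : ℝ :=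
  ∑' n : ℕ, μ ^ (n + 1) * gaussK d ((n : ℝ) + 1) x

/-- The norm `‖f‖ = max(∫|f|, sup|f|, sup |x|^d |f(x)|) ∈ [0,∞]`. -/
noncomputable def Bnorm (d : ℕ) (f : EuclideanSpace ℝ (Fin d) → ℝ) : ℝ≥0∞ :=
  max (∫⁻ x, ENNReal.ofReal |f x|)
    (max (⨆ x : EuclideanSpace ℝ (Fin d), ENNReal.ofReal |f x|)
      (⨆ x : EuclideanSpace ℝ (Fin d), ENNReal.ofReal (‖x‖ ^ d * |f x|)))

/-- Convolution `(f⋆g)(x) = ∫ f(y) g(x−y) dy`. -/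
noncomputable def convol (d : ℕ) (f g : EuclideanSpace ℝ (Fin d) → ℝ)
    (x : EuclideanSpace ℝ (Fin d)) : ℝ :=
  ∫ y, f y * g (x - y)


/-! ### The bracket -/

/-- The parabolic bracket `√(t + |x|²)`; for `t = 1` it is the Japanese bracket of `x`. -/
noncomputable def brk {d : ℕ} (t : ℝ) (x : EuclideanSpace ℝ (Fin d)) : ℝ := √(t + ‖x‖ ^ 2)

section

variable {d : ℕ}

lemma brk_sq {t : ℝ} (ht : 0 ≤ t) (x : EuclideanSpace ℝ (Fin d)) :
    brk t x ^ 2 = t + ‖x‖ ^ 2 := Real.sq_sqrt (by positivity)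

lemma brk_pos {t : ℝ} (ht : 0 < t) (x : EuclideanSpace ℝ (Fin d)) : 0 < brk t x :=
  Real.sqrt_pos.2 (by positivity)

lemma brk_mono {s t : ℝ} (hst : s ≤ t) (x : EuclideanSpace ℝ (Fin d)) : brk s x ≤ brk t x :=
  Real.sqrt_le_sqrt (by linarith)

lemma norm_le_brk {t : ℝ} (ht : 0 ≤ t) (x : EuclideanSpace ℝ (Fin d)) : ‖x‖ ≤ brk t x :=
  Real.le_sqrt_of_sq_le (by linarith)

lemma one_le_brk {t : ℝ} (ht : 1 ≤ t) (x : EuclideanSpace ℝ (Fin d)) : 1 ≤ brk t x :=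
  Real.le_sqrt_of_sq_le (by nlinarith [sq_nonneg ‖x‖])

lemma brk_le_two_mul {t : ℝ} (ht : 0 ≤ t) {x z : EuclideanSpace ℝ (Fin d)}
    (h : ‖x‖ ≤ 2 * ‖z‖) : brk t x ≤ 2 * brk t z := by
  refine Real.sqrt_le_iff.2 ⟨by unfold brk; positivity, ?_⟩
  rw [mul_pow, brk_sq ht]
  nlinarith [norm_nonneg x, norm_nonneg z]

lemma continuous_brk {t : ℝ} : Continuous (fun x : EuclideanSpace ℝ (Fin d) => brk t x) := by
  unfold brk; fun_prop

lemma gaussK_nonneg {t : ℝ} (ht : 0 ≤ t) (x : EuclideanSpace ℝ (Fin d)) : 0 ≤ gaussK d t x := by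
  unfold gaussK; positivity

lemma continuous_gaussK (t : ℝ) : Continuous (gaussK d t) := by
  unfold gaussK; fun_prop

/-- Gaussian decay beats every power of the bracket. All derivative bounds below are obtained by
choosing `k` equal to the power of `√t` which the differentiation puts into the denominator. -/
lemma gaussK_mul_brk_pow_le (d k : ℕ) : ∃ C : ℝ, 0 ≤ C ∧ ∀ t : ℝ, 0 < t →
    ∀ z : EuclideanSpace ℝ (Fin d), gaussK d t z * brk t z ^ (d + k) ≤ C * √t ^ k := by
  refine ⟨2 ^ (d + k) * (d + k).factorial * Real.exp (1 / 2), by positivity, fun t ht z => ?_⟩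
  have hs : 0 < √t := Real.sqrt_pos.2 ht
  have hss : √t ^ 2 = t := Real.sq_sqrt ht.le
  set v : ℝ := 1 + ‖z‖ ^ 2 / t with hv
  have hv1 : 1 ≤ v := by rw [hv]; linarith [div_nonneg (sq_nonneg ‖z‖) ht.le]
  have hbrk : brk t z = √t * √v := by
    rw [← Real.sqrt_mul ht.le]
    unfold brk
    congr 1
    rw [hv]; field_simp
  have hw1 : √v ≤ v := by
    rw [Real.sqrt_le_iff]
    exact ⟨by linarith, by nlinarith⟩
  have hcoef : (2 * Real.pi * t) ^ (-(d : ℝ) / 2) ≤ (√t ^ d)⁻¹ := by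
    have h1 : (2 * Real.pi * t) ^ (-(d : ℝ) / 2) ≤ t ^ (-(d : ℝ) / 2) := by
      apply Real.rpow_le_rpow_of_nonpos ht
      · nlinarith [Real.pi_gt_three]
      · have : (0 : ℝ) ≤ d := Nat.cast_nonneg d
        linarith
    refine h1.trans (le_of_eq ?_)
    rw [Real.sqrt_eq_rpow, ← Real.rpow_natCast, ← Real.rpow_mul ht.le, ← Real.rpow_neg ht.le]
    congr 1; ring
  have hexp : v ^ (d + k) * Real.exp (-‖z‖ ^ 2 / (2 * t)) ≤
      2 ^ (d + k) * (d + k).factorial * Real.exp (1 / 2) := by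
    have h1 := Real.pow_div_factorial_le_exp (v / 2) (by linarith) (d + k)
    have h2 : Real.exp (-‖z‖ ^ 2 / (2 * t)) = Real.exp (1 / 2) * Real.exp (-(v / 2)) := by
      rw [← Real.exp_add]; congr 1; rw [hv]; field_simp; ring
    have hf : (0 : ℝ) < (d + k).factorial := by exact_mod_cast Nat.factorial_pos _
    rw [div_le_iff₀ hf, div_pow, div_le_iff₀ (by positivity)] at h1
    rw [h2, Real.exp_neg]
    have he := Real.exp_pos (v / 2)
    calc v ^ (d + k) * (Real.exp (1 / 2) * (Real.exp (v / 2))⁻¹)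
        ≤ (Real.exp (v / 2) * (d + k).factorial * 2 ^ (d + k)) *
          (Real.exp (1 / 2) * (Real.exp (v / 2))⁻¹) := by gcongr
      _ = _ := by field_simp
  calc gaussK d t z * brk t z ^ (d + k)
      ≤ (√t ^ d)⁻¹ * Real.exp (-‖z‖ ^ 2 / (2 * t)) * (√t * v) ^ (d + k) := by
        unfold gaussK; rw [hbrk]; gcongr
    _ = √t ^ k * (v ^ (d + k) * Real.exp (-‖z‖ ^ 2 / (2 * t))) := by
        rw [mul_pow, pow_add (√t)]; field_simp
    _ ≤ √t ^ k * (2 ^ (d + k) * (d + k).factorial * Real.exp (1 / 2)) := by gcongr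
    _ = _ := by ring

/-- The form of `gaussK_mul_brk_pow_le` used for derivatives: `brk / t` is the size of one
spatial derivative, and each such factor gains one power of decay. -/
lemma gaussK_le (d : ℕ) : ∃ C : ℝ, 0 ≤ C ∧ ∀ j ≤ 4, ∀ t : ℝ, 0 < t →
    ∀ z : EuclideanSpace ℝ (Fin d), gaussK d t z * (brk t z / t) ^ j ≤
      C * (brk t z ^ (d + j))⁻¹ := by
  choose C hC0 hC using fun k => gaussK_mul_brk_pow_le d k
  refine ⟨∑ i ∈ Finset.range 5, C (2 * i), Finset.sum_nonneg fun i _ => hC0 _, ?_⟩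
  intro j hj t ht z
  have hb := brk_pos ht z
  have h1 := hC (2 * j) t ht z
  rw [pow_mul, Real.sq_sqrt ht.le] at h1
  have h2 : C (2 * j) ≤ ∑ i ∈ Finset.range 5, C (2 * i) :=
    Finset.single_le_sum (f := fun i => C (2 * i)) (fun i _ => hC0 _)
      (Finset.mem_range.2 (by omega))
  have h3 : gaussK d t z * (brk t z / t) ^ j ≤ C (2 * j) * (brk t z ^ (d + j))⁻¹ := by
    rw [div_pow, mul_div_assoc', div_le_iff₀ (by positivity), mul_right_comm,
      ← div_eq_mul_inv, le_div_iff₀ (by positivity)]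
    calc gaussK d t z * brk t z ^ j * brk t z ^ (d + j)
        = gaussK d t z * brk t z ^ (d + 2 * j) := by ring
      _ ≤ _ := h1
  exact h3.trans (by gcongr)

/-! ### Summation over time -/

lemma sum_range_brk_le (x : EuclideanSpace ℝ (Fin d)) (N : ℕ) :
    ∑ n ∈ Finset.range N, (brk ((n : ℝ) + 1) x ^ 3)⁻¹ ≤
      6 * ((brk 1 x)⁻¹ - (brk ((N : ℝ) + 1) x)⁻¹) := by
  induction N with
  | zero => simp
  | succ N ih =>
    rw [Finset.sum_range_succ]
    have ha := one_le_brk (t := (N : ℝ) + 1) (by linarith [(Nat.cast_nonneg N : (0 : ℝ) ≤ N)]) x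
    have hab : brk ((N : ℝ) + 1) x ≤ brk ((N : ℝ) + 1 + 1) x := brk_mono (by linarith) x
    have hsq : brk ((N : ℝ) + 1 + 1) x ^ 2 = brk ((N : ℝ) + 1) x ^ 2 + 1 := by
      rw [brk_sq (by positivity), brk_sq (by positivity)]; ring
    push_cast
    set a := brk ((N : ℝ) + 1) x
    set b := brk ((N : ℝ) + 1 + 1) x
    have ha0 : 0 < a := by linarith
    have hb0 : 0 < b := by linarith
    have key : (a ^ 3)⁻¹ ≤ 6 * (a⁻¹ - b⁻¹) := by
      have h1 : a⁻¹ - b⁻¹ = 1 / (a * b * (a + b)) := by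
        field_simp; nlinarith
      rw [h1, inv_eq_one_div, mul_one_div, div_le_div_iff₀ (by positivity) (by positivity)]
      have hb2 : b ≤ 2 * a := by nlinarith
      nlinarith [mul_pos ha0 hb0, mul_pos ha0 ha0]
    linarith

/-- Summing over time loses two powers of the bracket. -/
lemma summable_brk (x : EuclideanSpace ℝ (Fin d)) (k : ℕ) :
    Summable (fun n : ℕ => (brk ((n : ℝ) + 1) x ^ (k + 3))⁻¹) ∧
    ∑' n : ℕ, (brk ((n : ℝ) + 1) x ^ (k + 3))⁻¹ ≤ 6 * (brk 1 x ^ (k + 1))⁻¹ := by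
  have hb := brk_pos one_pos x
  have hnn : ∀ n : ℕ, 0 < brk ((n : ℝ) + 1) x := fun n => brk_pos (by positivity) x
  have hbd : ∀ N, ∑ n ∈ Finset.range N, (brk ((n : ℝ) + 1) x ^ (k + 3))⁻¹ ≤
      6 * (brk 1 x ^ (k + 1))⁻¹ := by
    intro N
    calc ∑ n ∈ Finset.range N, (brk ((n : ℝ) + 1) x ^ (k + 3))⁻¹
        ≤ ∑ n ∈ Finset.range N, (brk 1 x ^ k)⁻¹ * (brk ((n : ℝ) + 1) x ^ 3)⁻¹ := by
          refine Finset.sum_le_sum fun n _ => ?_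
          have := hnn n
          rw [pow_add, mul_inv]
          have : brk 1 x ≤ brk ((n : ℝ) + 1) x :=
            brk_mono (by linarith [(Nat.cast_nonneg n : (0 : ℝ) ≤ n)]) x
          gcongr
      _ ≤ (brk 1 x ^ k)⁻¹ * (6 * (brk 1 x)⁻¹) := by
          rw [← Finset.mul_sum]
          have h := sum_range_brk_le x N
          have := inv_pos.2 (hnn N)
          gcongr
          linarith
      _ = _ := by rw [pow_succ, mul_inv]; ring
  have h0 : ∀ n : ℕ, 0 ≤ (brk ((n : ℝ) + 1) x ^ (k + 3))⁻¹ := fun n => by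
    have := hnn n; positivity
  exact ⟨summable_of_sum_range_le h0 hbd, Real.tsum_le_of_sum_range_le h0 hbd⟩

/-- Absolute bound for a series with weights `μ^(n+1)`, dominated by powers of the bracket. -/
lemma weighted_tsum_le {μ : ℝ} (h0 : 0 ≤ μ) (h1 : μ ≤ 1) (x : EuclideanSpace ℝ (Fin d)) (k : ℕ)
    {K : ℝ} {f : ℕ → ℝ} (hf : ∀ n, |f n| ≤ K * (brk ((n : ℝ) + 1) x ^ (k + 3))⁻¹) :
    Summable (fun n => μ ^ (n + 1) * f n) ∧
    |∑' n, μ ^ (n + 1) * f n| ≤ 6 * K * μ * (brk 1 x ^ (k + 1))⁻¹ := by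
  obtain ⟨hs, hle⟩ := summable_brk x k
  have hK : 0 ≤ K := by
    have := (abs_nonneg _).trans (hf 0)
    have hp := brk_pos (t := ((0 : ℕ) : ℝ) + 1) (by positivity) x
    exact nonneg_of_mul_nonneg_left this (by positivity)
  have hb : ∀ n, ‖μ ^ (n + 1) * f n‖ ≤ μ * K * (brk ((n : ℝ) + 1) x ^ (k + 3))⁻¹ := by
    intro n
    rw [norm_mul, Real.norm_eq_abs, Real.norm_eq_abs, abs_of_nonneg (pow_nonneg h0 _), mul_assoc]
    have : μ ^ (n + 1) ≤ μ := by
      rw [pow_succ]; exact mul_le_of_le_one_left h0 (pow_le_one₀ h0 h1)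
    have := hf n
    gcongr
  refine ⟨Summable.of_norm_bounded (hs.mul_left _) hb, ?_⟩
  refine (tsum_of_norm_bounded (hs.mul_left (μ * K)).hasSum hb).trans ?_
  rw [tsum_mul_left]
  calc _ ≤ μ * K * (6 * (brk 1 x ^ (k + 1))⁻¹) := by gcongr
    _ = _ := by ring

/-! ### Taylor expansions in space and time -/

lemma taylor_two {f f1 f2 : ℝ → ℝ} {B : ℝ}
    (h0 : ∀ s ∈ Set.Icc (0 : ℝ) 1, HasDerivAt f (f1 s) s)
    (h1 : ∀ s ∈ Set.Icc (0 : ℝ) 1, HasDerivAt f1 (f2 s) s)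
    (hB : ∀ s ∈ Set.Icc (0 : ℝ) 1, |f2 s| ≤ B) : |f 1 - f 0 - f1 0| ≤ B := by
  have e1 : ∀ s ∈ Set.Icc (0 : ℝ) 1, |f1 s - f1 0| ≤ B := by
    intro s hs
    have := norm_image_sub_le_of_norm_deriv_le_segment'
      (fun s hs => (h1 s hs).hasDerivWithinAt) (fun s hs => hB s ⟨hs.1, hs.2.le⟩) s hs
    have hB0 : 0 ≤ B := (abs_nonneg _).trans (hB s hs)
    refine this.trans ?_
    nlinarith [hs.1, hs.2]
  have := norm_image_sub_le_of_norm_deriv_le_segment_01' (f := fun s => f s - s * f1 0)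
    (f' := fun s => f1 s - f1 0) (C := B)
    (fun s hs => by
      have := (h0 s hs).sub ((hasDerivAt_id s).mul_const (f1 0))
      simp only [one_mul] at this
      exact this.hasDerivWithinAt)
    (fun s hs => e1 s ⟨hs.1, hs.2.le⟩)
  rw [Real.norm_eq_abs] at this
  convert this using 2; ring

lemma taylor_three {f f1 f2 f3 : ℝ → ℝ} {B : ℝ}
    (h0 : ∀ s ∈ Set.Icc (0 : ℝ) 1, HasDerivAt f (f1 s) s)
    (h1 : ∀ s ∈ Set.Icc (0 : ℝ) 1, HasDerivAt f1 (f2 s) s)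
    (h2 : ∀ s ∈ Set.Icc (0 : ℝ) 1, HasDerivAt f2 (f3 s) s)
    (hB : ∀ s ∈ Set.Icc (0 : ℝ) 1, |f3 s| ≤ B) : |f 1 - f 0 - f1 0 - f2 0 / 2| ≤ B := by
  have e2 : ∀ s ∈ Set.Icc (0 : ℝ) 1, |f2 s - f2 0| ≤ B := by
    intro s hs
    have := norm_image_sub_le_of_norm_deriv_le_segment'
      (fun s hs => (h2 s hs).hasDerivWithinAt) (fun s hs => hB s ⟨hs.1, hs.2.le⟩) s hs
    have hB0 : 0 ≤ B := (abs_nonneg _).trans (hB s hs)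
    refine this.trans ?_
    nlinarith [hs.1, hs.2]
  have := taylor_two (f := fun s => f s - s ^ 2 / 2 * f2 0) (f1 := fun s => f1 s - s * f2 0)
    (f2 := fun s => f2 s - f2 0) (B := B)
    (fun s hs => by
      have := (h0 s hs).sub ((((hasDerivAt_id s).pow 2).div_const 2).mul_const (f2 0))
      convert! this using 1
      simp)
    (fun s hs => by
      have := (h1 s hs).sub ((hasDerivAt_id s).mul_const (f2 0))
      simp only [one_mul] at this
      exact this)
    e2
  convert this using 2; ring

lemma hasDerivAt_gaussK_line (t : ℝ) (x y : EuclideanSpace ℝ (Fin d)) (s : ℝ) :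
    HasDerivAt (fun s : ℝ => gaussK d t (x - s • y))
      (inner ℝ (x - s • y) y / t * gaussK d t (x - s • y)) s := by
  have h1 : HasDerivAt (fun s : ℝ => x - s • y) (-y) s := by
    simpa using ((hasDerivAt_id s).smul_const y).const_sub x
  have h2 := h1.norm_sq
  have h3 := ((h2.neg.div_const (2 * t)).exp).const_mul ((2 * Real.pi * t) ^ (-(d : ℝ) / 2))
  unfold gaussK
  convert! h3 using 1
  rw [inner_neg_right]
  simp only [Pi.neg_apply]
  ring

lemma hasDerivAt_inner_line (x y : EuclideanSpace ℝ (Fin d)) (s : ℝ) :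
    HasDerivAt (fun s : ℝ => inner ℝ (x - s • y) y) (-‖y‖ ^ 2) s := by
  have h1 : HasDerivAt (fun s : ℝ => inner ℝ x y - s * ‖y‖ ^ 2) (-‖y‖ ^ 2) s := by
    simpa using ((hasDerivAt_id s).mul_const (‖y‖ ^ 2)).const_sub (inner ℝ x y)
  convert! h1 using 1
  ext s
  rw [inner_sub_left, real_inner_smul_left, real_inner_self_eq_norm_sq]

/-- The remainder of the second-order expansion of `y ↦ φ_t(x - y)` at `y = 0`. -/
noncomputable def taylorRem (d : ℕ) (t : ℝ) (x y : EuclideanSpace ℝ (Fin d)) : ℝ :=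
  gaussK d t (x - y) - gaussK d t x - inner ℝ x y * (gaussK d t x / t)
    - (inner ℝ x y ^ 2 * (gaussK d t x / t ^ 2) - ‖y‖ ^ 2 * (gaussK d t x / t)) / 2

lemma taylorRem_le_of_near (d : ℕ) : ∃ C : ℝ, 0 ≤ C ∧ ∀ t : ℝ, 0 < t →
    ∀ x y : EuclideanSpace ℝ (Fin d), 2 * ‖y‖ ≤ ‖x‖ →
      |taylorRem d t x y| ≤ C * ‖y‖ ^ 3 * (brk t x ^ (d + 3))⁻¹ := by
  obtain ⟨C, hC0, hC⟩ := gaussK_le d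
  refine ⟨4 * C * 2 ^ (d + 3), by positivity, fun t ht x y hxy => ?_⟩
  have hg := hasDerivAt_gaussK_line t x y
  have ha := hasDerivAt_inner_line x y
  have key := taylor_three (f := fun s => gaussK d t (x - s • y))
    (f1 := fun s => inner ℝ (x - s • y) y / t * gaussK d t (x - s • y))
    (f2 := fun s => (inner ℝ (x - s • y) y ^ 2 / t ^ 2 - ‖y‖ ^ 2 / t) * gaussK d t (x - s • y))
    (f3 := fun s => (inner ℝ (x - s • y) y ^ 3 / t ^ 3 - 3 * inner ℝ (x - s • y) y * ‖y‖ ^ 2 / t ^ 2)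
      * gaussK d t (x - s • y))
    (B := 4 * C * 2 ^ (d + 3) * ‖y‖ ^ 3 * (brk t x ^ (d + 3))⁻¹)
    (fun s _ => hg s)
    (fun s _ => by
      convert! ((ha s).div_const t).mul (hg s) using 1
      field_simp; ring)
    (fun s _ => by
      convert! ((((ha s).pow 2).div_const (t ^ 2)).sub_const (‖y‖ ^ 2 / t)).mul (hg s) using 1
      simp only [Pi.pow_apply]
      field_simp; ring)
    (fun s hs => by
      have hxz : ‖x‖ ≤ 2 * ‖x - s • y‖ := by
        have h1 : ‖x‖ - ‖s • y‖ ≤ ‖x - s • y‖ := norm_sub_norm_le _ _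
        have h2 : ‖s • y‖ ≤ ‖y‖ := by
          rw [norm_smul, Real.norm_eq_abs, abs_of_nonneg hs.1]
          exact mul_le_of_le_one_left (norm_nonneg _) hs.2
        linarith
      generalize x - s • y = z at hxz ⊢
      have hbx := brk_pos ht x
      have hbz := brk_pos ht z
      have hbb := brk_le_two_mul ht.le hxz
      have hin : |inner ℝ z y| ≤ brk t z * ‖y‖ :=
        (abs_real_inner_le_norm z y).trans (by gcongr; exact norm_le_brk ht.le z)
      have htb : t ≤ brk t z ^ 2 := by rw [brk_sq ht.le]; linarith [sq_nonneg ‖z‖]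
      have hgz := gaussK_nonneg ht.le z
      rw [abs_mul, abs_of_nonneg hgz]
      have hpoly : |inner ℝ z y ^ 3 / t ^ 3 - 3 * inner ℝ z y * ‖y‖ ^ 2 / t ^ 2| ≤
          4 * ‖y‖ ^ 3 * (brk t z / t) ^ 3 := by
        refine (abs_sub _ _).trans ?_
        have e1 : |inner ℝ z y ^ 3 / t ^ 3| ≤ ‖y‖ ^ 3 * (brk t z / t) ^ 3 := by
          rw [abs_div, abs_pow, abs_of_pos (by positivity : 0 < t ^ 3), div_pow, mul_div_assoc']
          gcongr
          calc |inner ℝ z y| ^ 3 ≤ (brk t z * ‖y‖) ^ 3 := by gcongr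
            _ = _ := by ring
        have e2 : |3 * inner ℝ z y * ‖y‖ ^ 2 / t ^ 2| ≤ 3 * ‖y‖ ^ 3 * (brk t z / t) ^ 3 := by
          rw [abs_div, abs_mul, abs_mul, abs_of_pos (by positivity : 0 < t ^ 2),
            abs_of_pos (by norm_num : (0 : ℝ) < 3), abs_of_nonneg (by positivity : 0 ≤ ‖y‖ ^ 2),
            div_pow, mul_div_assoc', div_le_div_iff₀ (by positivity) (by positivity)]
          calc 3 * |inner ℝ z y| * ‖y‖ ^ 2 * t ^ 3 = 3 * |inner ℝ z y| * ‖y‖ ^ 2 * t * t ^ 2 := by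
                ring
            _ ≤ 3 * (brk t z * ‖y‖) * ‖y‖ ^ 2 * brk t z ^ 2 * t ^ 2 := by gcongr
            _ = _ := by ring
        linarith
      calc _ ≤ 4 * ‖y‖ ^ 3 * (brk t z / t) ^ 3 * gaussK d t z := by gcongr
        _ = 4 * ‖y‖ ^ 3 * (gaussK d t z * (brk t z / t) ^ 3) := by ring
        _ ≤ 4 * ‖y‖ ^ 3 * (C * (brk t z ^ (d + 3))⁻¹) := by
            exact mul_le_mul_of_nonneg_left (hC 3 (by norm_num) t ht z) (by positivity)
        _ ≤ 4 * ‖y‖ ^ 3 * (C * ((brk t x / 2) ^ (d + 3))⁻¹) := by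
            gcongr; linarith
        _ = _ := by rw [div_pow, inv_div]; field_simp)
  refine le_trans (le_of_eq ?_) key
  unfold taylorRem
  simp only [one_smul, zero_smul, sub_zero]
  congr 1
  ring

/-- Termwise bounds for the expansion, valid for all `y`. They are used where `y` is not small
compared with `x`, so that the Taylor remainder has no useful cancellation. -/
lemma taylorRem_le_of_far (d : ℕ) : ∃ C : ℝ, 0 ≤ C ∧ ∀ t : ℝ, 0 < t →
    ∀ x y : EuclideanSpace ℝ (Fin d),
      |gaussK d t x| ≤ C * (brk t x ^ d)⁻¹ ∧
      |gaussK d t x / t| ≤ C * (brk t x ^ (d + 2))⁻¹ ∧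
      |gaussK d t x / t ^ 2| ≤ C * (brk t x ^ (d + 4))⁻¹ ∧
      |taylorRem d t x y - gaussK d t (x - y)| ≤ 3 * C * ((brk t x ^ d)⁻¹
        + ‖y‖ * (brk t x ^ (d + 1))⁻¹ + ‖y‖ ^ 2 * (brk t x ^ (d + 2))⁻¹) := by
  obtain ⟨C, hC0, hC⟩ := gaussK_le d
  refine ⟨C, hC0, fun t ht x y => ?_⟩
  have hb := brk_pos ht x
  have hg := gaussK_nonneg ht.le x
  have h0 := hC 0 (by norm_num) t ht x
  have h2 := hC 2 (by norm_num) t ht x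
  have h4 := hC 4 (by norm_num) t ht x
  simp only [pow_zero, mul_one, add_zero] at h0
  have a0 : |gaussK d t x| ≤ C * (brk t x ^ d)⁻¹ := by rwa [abs_of_nonneg hg]
  have htb : t ≤ brk t x ^ 2 := by rw [brk_sq ht.le]; linarith [sq_nonneg ‖x‖]
  have b2 : gaussK d t x / t ≤ gaussK d t x * (brk t x / t) ^ 2 := by
    rw [div_eq_mul_one_div]
    gcongr
    rw [div_pow, div_le_div_iff₀ ht (by positivity)]
    nlinarith
  have a2 : |gaussK d t x / t| ≤ C * (brk t x ^ (d + 2))⁻¹ := by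
    rw [abs_of_nonneg (by positivity)]
    exact b2.trans h2
  have a4 : |gaussK d t x / t ^ 2| ≤ C * (brk t x ^ (d + 4))⁻¹ := by
    rw [abs_of_nonneg (by positivity)]
    refine le_trans ?_ h4
    rw [div_eq_mul_one_div]
    gcongr
    rw [div_pow, div_le_div_iff₀ (by positivity) (by positivity)]
    nlinarith [pow_le_pow_left₀ ht.le htb 2, pow_pos ht 2]
  refine ⟨a0, a2, a4, ?_⟩
  have hin : |inner ℝ x y| ≤ brk t x * ‖y‖ :=
    (abs_real_inner_le_norm x y).trans (by gcongr; exact norm_le_brk ht.le x)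
  have c1 : |inner ℝ x y * (gaussK d t x / t)| ≤ C * (‖y‖ * (brk t x ^ (d + 1))⁻¹) := by
    rw [abs_mul]
    calc _ ≤ (brk t x * ‖y‖) * (C * (brk t x ^ (d + 2))⁻¹) := by gcongr
      _ = _ := by rw [pow_succ _ (d + 1)]; field_simp
  have c2 : |inner ℝ x y ^ 2 * (gaussK d t x / t ^ 2)| ≤
      C * (‖y‖ ^ 2 * (brk t x ^ (d + 2))⁻¹) := by
    rw [abs_mul, abs_pow]
    calc _ ≤ (brk t x * ‖y‖) ^ 2 * (C * (brk t x ^ (d + 4))⁻¹) := by gcongr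
      _ = _ := by rw [show d + 4 = d + 2 + 2 by ring, pow_add _ (d + 2)]; field_simp
  have c3 : |‖y‖ ^ 2 * (gaussK d t x / t)| ≤ C * (‖y‖ ^ 2 * (brk t x ^ (d + 2))⁻¹) := by
    rw [abs_mul, abs_of_nonneg (by positivity : 0 ≤ ‖y‖ ^ 2)]
    calc _ ≤ ‖y‖ ^ 2 * (C * (brk t x ^ (d + 2))⁻¹) := by gcongr
      _ = _ := by ring
  have p0 : 0 ≤ C * (brk t x ^ d)⁻¹ := by positivity
  have p1 : 0 ≤ C * (‖y‖ * (brk t x ^ (d + 1))⁻¹) := by positivity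
  have p2 : 0 ≤ C * (‖y‖ ^ 2 * (brk t x ^ (d + 2))⁻¹) := by positivity
  unfold taylorRem
  rw [abs_le] at *
  constructor <;> linarith [a0.1, a0.2, c1.1, c1.2, c2.1, c2.2, c3.1, c3.2]

lemma hasDerivAt_gaussK_time {t : ℝ} (ht : 0 < t) (x : EuclideanSpace ℝ (Fin d)) :
    HasDerivAt (fun t : ℝ => gaussK d t x)
      ((‖x‖ ^ 2 / (2 * t ^ 2) - d / (2 * t)) * gaussK d t x) t := by
  have hpi := Real.pi_pos
  have h1 : HasDerivAt (fun t : ℝ => 2 * Real.pi * t) (2 * Real.pi) t := by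
    simpa using (hasDerivAt_id t).const_mul (2 * Real.pi)
  have h2 := h1.rpow_const (p := -(d : ℝ) / 2) (Or.inl (by positivity))
  have h3 : HasDerivAt (fun t : ℝ => -‖x‖ ^ 2 / (2 * t)) (‖x‖ ^ 2 / (2 * t ^ 2)) t := by
    have h := ((hasDerivAt_inv ht.ne').const_mul (-‖x‖ ^ 2 / 2))
    convert! h using 1
    · ext s; rw [div_mul_eq_div_div]; rw [div_eq_mul_inv]
    · field_simp
  have h4 := h2.mul h3.exp
  unfold gaussK
  convert! h4 using 1
  rw [Real.rpow_sub_one (by positivity)]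
  field_simp
  ring

/-- The forward difference `φ_{t+1} - φ_t` approximates `∂ₜφ_t`, with an error of the size of
`∂ₜ²φ_t`. -/
lemma gaussK_time_diff_le (d : ℕ) : ∃ C : ℝ, 0 ≤ C ∧ ∀ t : ℝ, 0 < t →
    ∀ x : EuclideanSpace ℝ (Fin d),
      |gaussK d (t + 1) x - gaussK d t x - (‖x‖ ^ 2 / (2 * t ^ 2) - d / (2 * t)) * gaussK d t x|
        ≤ C * (brk t x ^ (d + 4))⁻¹ := by
  obtain ⟨C, hC0, hC⟩ := gaussK_le d
  refine ⟨((1 + d) ^ 2 + 1 + d) * C, by positivity, fun t ht x => ?_⟩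
  have key := taylor_two (f := fun s => gaussK d (t + s) x)
    (f1 := fun s => (‖x‖ ^ 2 / (2 * (t + s) ^ 2) - d / (2 * (t + s))) * gaussK d (t + s) x)
    (f2 := fun s => (-‖x‖ ^ 2 / (t + s) ^ 3 + d / (2 * (t + s) ^ 2) +
      (‖x‖ ^ 2 / (2 * (t + s) ^ 2) - d / (2 * (t + s))) ^ 2) * gaussK d (t + s) x)
    (B := ((1 + d) ^ 2 + 1 + d) * C * (brk t x ^ (d + 4))⁻¹)
    (fun s hs => (hasDerivAt_gaussK_time (by linarith [hs.1] : 0 < t + s) x).comp_const_add t s)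
    (fun s hs => by
      have hts : 0 < t + s := by linarith [hs.1]
      have g := hasDerivAt_gaussK_time hts x
      have e : HasDerivAt (fun r : ℝ => ‖x‖ ^ 2 / 2 * (r ^ 2)⁻¹ - d / 2 * r⁻¹)
          (-‖x‖ ^ 2 / (t + s) ^ 3 + d / (2 * (t + s) ^ 2)) (t + s) := by
        have e1 := (((hasDerivAt_pow 2 (t + s)).inv (by positivity)).const_mul (‖x‖ ^ 2 / 2)).sub
          ((hasDerivAt_inv hts.ne').const_mul ((d : ℝ) / 2))
        convert! e1 using 1
        field_simp; push_cast; ring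
      have m := (e.mul g).comp_const_add t s
      convert! m using 1
      · ext r
        simp only [Pi.mul_apply]
        congr 1
        simp only [div_eq_mul_inv, mul_inv]; ring
      · simp only [div_eq_mul_inv, mul_inv]; ring)
    (fun s hs => by
      have hts : 0 < t + s := by linarith [hs.1]
      have hmono : brk t x ≤ brk (t + s) x := brk_mono (by linarith [hs.1]) x
      have hbx := brk_pos ht x
      generalize t + s = r at hts hmono ⊢
      have hbr := brk_pos hts x
      have hsq := brk_sq hts.le x
      have hg := gaussK_nonneg hts.le x
      rw [abs_mul, abs_of_nonneg hg]
      -- Every term is a product of two quantities each bounded by a multiple of `brk² / r²`.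
      have hp : |-‖x‖ ^ 2 / r ^ 3 + d / (2 * r ^ 2) + (‖x‖ ^ 2 / (2 * r ^ 2) - d / (2 * r)) ^ 2| ≤
          ((1 + d) ^ 2 + 1 + d) * (brk r x / r) ^ 4 := by
        set q := brk r x ^ 2 / r ^ 2 with hq
        have hq4 : (brk r x / r) ^ 4 = q ^ 2 := by rw [hq, div_pow]; ring
        have hx : ‖x‖ ^ 2 / r ^ 2 ≤ q := by rw [hq]; gcongr; exact norm_le_brk hts.le x
        have hr : 1 / r ≤ q := by
          rw [hq, div_le_div_iff₀ hts (by positivity)]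
          nlinarith [sq_nonneg ‖x‖]
        have hx0 : 0 ≤ ‖x‖ ^ 2 / r ^ 2 := by positivity
        have hr0 : 0 ≤ 1 / r := by positivity
        have e1 : -‖x‖ ^ 2 / r ^ 3 + d / (2 * r ^ 2) + (‖x‖ ^ 2 / (2 * r ^ 2) - d / (2 * r)) ^ 2
            = -(‖x‖ ^ 2 / r ^ 2) * (1 / r) + d / 2 * (1 / r) ^ 2
              + ((‖x‖ ^ 2 / r ^ 2) / 2 - d / 2 * (1 / r)) ^ 2 := by
          field_simp
        rw [e1, hq4]
        generalize ‖x‖ ^ 2 / r ^ 2 = a at *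
        generalize 1 / r = b at *
        have hd : (0 : ℝ) ≤ d := Nat.cast_nonneg d
        have hab : a * b ≤ q ^ 2 := by rw [sq]; gcongr
        have hab0 : 0 ≤ a * b := by positivity
        have hbb : b ^ 2 ≤ q ^ 2 := by gcongr
        have hdb : d * b ^ 2 ≤ d * q ^ 2 := by gcongr
        have hdb0 : 0 ≤ d * b ^ 2 := by positivity
        have hlin : |a / 2 - d / 2 * b| ≤ (1 + d) * q := by
          have : d * b ≤ d * q := by gcongr
          have : 0 ≤ d * b := by positivity
          rw [abs_le]; constructor <;> nlinarith
        have hsq2 : (a / 2 - d / 2 * b) ^ 2 ≤ ((1 + d) * q) ^ 2 := by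
          rw [← sq_abs]; gcongr
        rw [mul_pow] at hsq2
        have := sq_nonneg (a / 2 - d / 2 * b)
        have : 0 ≤ (1 + (d : ℝ)) ^ 2 * q ^ 2 := by positivity
        have : 0 ≤ d * q ^ 2 := by positivity
        rw [abs_le]; constructor <;> nlinarith
      calc _ ≤ ((1 + d) ^ 2 + 1 + d) * (brk r x / r) ^ 4 * gaussK d r x := by gcongr
        _ = ((1 + d) ^ 2 + 1 + d) * (gaussK d r x * (brk r x / r) ^ 4) := by ring
        _ ≤ ((1 + d) ^ 2 + 1 + d) * (C * (brk r x ^ (d + 4))⁻¹) := by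
            exact mul_le_mul_of_nonneg_left (hC 4 le_rfl r hts x) (by positivity)
        _ ≤ ((1 + d) ^ 2 + 1 + d) * (C * (brk t x ^ (d + 4))⁻¹) := by gcongr
        _ = _ := by ring)
  simpa using key


/-! ### The norm and Gaussian mixtures -/

lemma Bnorm_le {f : EuclideanSpace ℝ (Fin d) → ℝ} {K : ℝ}
    (h1 : ∫⁻ x, ENNReal.ofReal |f x| ≤ ENNReal.ofReal K) (h2 : ∀ x, |f x| ≤ K)
    (h3 : ∀ x, ‖x‖ ^ d * |f x| ≤ K) : Bnorm d f ≤ ENNReal.ofReal K :=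
  max_le h1 (max_le (iSup_le fun x => ENNReal.ofReal_le_ofReal (h2 x))
    (iSup_le fun x => ENNReal.ofReal_le_ofReal (h3 x)))

lemma Bnorm_le_add {f g h : EuclideanSpace ℝ (Fin d) → ℝ} (hg : Measurable g)
    (hf : ∀ x, |f x| ≤ |g x| + |h x|) : Bnorm d f ≤ Bnorm d g + Bnorm d h := by
  refine max_le ?_ (max_le (iSup_le fun x => ?_) (iSup_le fun x => ?_))
  · calc ∫⁻ x, ENNReal.ofReal |f x|
        ≤ ∫⁻ x, (ENNReal.ofReal |g x| + ENNReal.ofReal |h x|) := by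
          refine lintegral_mono fun x => ?_
          rw [← ENNReal.ofReal_add (abs_nonneg _) (abs_nonneg _)]
          exact ENNReal.ofReal_le_ofReal (hf x)
      _ = (∫⁻ x, ENNReal.ofReal |g x|) + ∫⁻ x, ENNReal.ofReal |h x| :=
          lintegral_add_left (by fun_prop) _
      _ ≤ _ := add_le_add (le_max_left _ _) (le_max_left _ _)
  · refine (ENNReal.ofReal_le_ofReal (hf x)).trans ?_
    rw [ENNReal.ofReal_add (abs_nonneg _) (abs_nonneg _)]
    exact add_le_add
      ((le_iSup (fun x => ENNReal.ofReal |g x|) x).trans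
        ((le_max_left _ _).trans (le_max_right _ _)))
      ((le_iSup (fun x => ENNReal.ofReal |h x|) x).trans
        ((le_max_left _ _).trans (le_max_right _ _)))
  · have h0 : ‖x‖ ^ d * |f x| ≤ ‖x‖ ^ d * |g x| + ‖x‖ ^ d * |h x| := by
      rw [← mul_add]; gcongr; exact hf x
    refine (ENNReal.ofReal_le_ofReal h0).trans ?_
    rw [ENNReal.ofReal_add (by positivity) (by positivity)]
    exact add_le_add
      ((le_iSup (fun x => ENNReal.ofReal (‖x‖ ^ d * |g x|)) x).trans
        ((le_max_right _ _).trans (le_max_right _ _)))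
      ((le_iSup (fun x => ENNReal.ofReal (‖x‖ ^ d * |h x|)) x).trans
        ((le_max_right _ _).trans (le_max_right _ _)))

lemma integral_gaussK {t : ℝ} (ht : 0 < t) :
    ∫ x : EuclideanSpace ℝ (Fin d), gaussK d t x = 1 := by
  have hpi := Real.pi_pos
  have h := GaussianFourier.integral_rexp_neg_mul_sq_norm (V := EuclideanSpace ℝ (Fin d))
    (b := 1 / (2 * t)) (by positivity)
  unfold gaussK
  rw [integral_const_mul]
  have e : ∀ x : EuclideanSpace ℝ (Fin d),
      Real.exp (-‖x‖ ^ 2 / (2 * t)) = Real.exp (-(1 / (2 * t)) * ‖x‖ ^ 2) := by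
    intro x; congr 1; ring
  simp_rw [e]
  rw [h, finrank_euclideanSpace_fin, show Real.pi / (1 / (2 * t)) = 2 * Real.pi * t by field_simp,
    ← Real.rpow_add (by positivity)]
  rw [show -(d : ℝ) / 2 + d / 2 = 0 by ring, Real.rpow_zero]

lemma lintegral_gaussK {t : ℝ} (ht : 0 < t) :
    ∫⁻ x : EuclideanSpace ℝ (Fin d), ENNReal.ofReal (gaussK d t x) = 1 := by
  have h := integral_gaussK (d := d) ht
  have hi : Integrable (gaussK d t) := by
    by_contra hn
    rw [integral_undef hn] at h
    exact zero_ne_one h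
  rw [← ofReal_integral_eq_lintegral_ofReal hi
    (Filter.Eventually.of_forall fun x => gaussK_nonneg ht.le x), h, ENNReal.ofReal_one]

/-- Each of `φ_1, φ_2, …` has norm bounded by the same constant, hence so has any mixture of them
of total mass one. -/
lemma mixture_bound (d : ℕ) : ∃ C : ℝ, 0 ≤ C ∧ ∀ (a : ℕ → ℝ) (S : ℝ), (∀ n, 0 ≤ a n) →
    HasSum a S →
      (∀ x, Summable fun n : ℕ => a n * gaussK d ((n : ℝ) + 1) x) ∧
      Continuous (fun x => ∑' n : ℕ, a n * gaussK d ((n : ℝ) + 1) x) ∧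
      Bnorm d (fun x => ∑' n : ℕ, a n * gaussK d ((n : ℝ) + 1) x) ≤ ENNReal.ofReal (C * S) := by
  obtain ⟨C, hC0, hC⟩ := taylorRem_le_of_far d
  refine ⟨C + 1, by positivity, fun a S ha hS => ?_⟩
  have hS0 : 0 ≤ S := hS.nonneg ha
  have hpos : ∀ n : ℕ, (0 : ℝ) < (n : ℝ) + 1 := fun n => by positivity
  have hg0 : ∀ (n : ℕ) (x : EuclideanSpace ℝ (Fin d)), 0 ≤ gaussK d ((n : ℝ) + 1) x :=
    fun n x => gaussK_nonneg (hpos n).le x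
  have hgd : ∀ (n : ℕ) (x : EuclideanSpace ℝ (Fin d)),
      gaussK d ((n : ℝ) + 1) x ≤ C * (brk ((n : ℝ) + 1) x ^ d)⁻¹ :=
    fun n x => (le_abs_self _).trans (hC _ (hpos n) x 0).1
  have hg : ∀ (n : ℕ) (x : EuclideanSpace ℝ (Fin d)), gaussK d ((n : ℝ) + 1) x ≤ C := by
    intro n x
    refine (hgd n x).trans (mul_le_of_le_one_right hC0 (inv_le_one_of_one_le₀ ?_))
    exact one_le_pow₀ (one_le_brk (by linarith [(Nat.cast_nonneg n : (0 : ℝ) ≤ n)]) x)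
  have hgx : ∀ (n : ℕ) (x : EuclideanSpace ℝ (Fin d)),
      ‖x‖ ^ d * gaussK d ((n : ℝ) + 1) x ≤ C := by
    intro n x
    have hb := brk_pos (hpos n) x
    calc ‖x‖ ^ d * gaussK d ((n : ℝ) + 1) x
        ≤ brk ((n : ℝ) + 1) x ^ d * (C * (brk ((n : ℝ) + 1) x ^ d)⁻¹) := by
          gcongr
          · exact hg0 n x
          · exact norm_le_brk (hpos n).le x
          · exact hgd n x
      _ = C := by field_simp
  have hterm0 : ∀ (n : ℕ) (x : EuclideanSpace ℝ (Fin d)), 0 ≤ a n * gaussK d ((n : ℝ) + 1) x :=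
    fun n x => mul_nonneg (ha n) (hg0 n x)
  have hterm : ∀ (n : ℕ) (x : EuclideanSpace ℝ (Fin d)),
      ‖a n * gaussK d ((n : ℝ) + 1) x‖ ≤ a n * C := by
    intro n x
    rw [Real.norm_of_nonneg (hterm0 n x)]
    exact mul_le_mul_of_nonneg_left (hg n x) (ha n)
  have hsC := hS.summable.mul_right C
  have hsum : ∀ x, Summable fun n : ℕ => a n * gaussK d ((n : ℝ) + 1) x :=
    fun x => Summable.of_norm_bounded hsC fun n => hterm n x
  refine ⟨hsum, continuous_tsum (fun n => (continuous_gaussK _).const_mul _) hsC hterm, ?_⟩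
  have hnn : ∀ x : EuclideanSpace ℝ (Fin d), 0 ≤ ∑' n : ℕ, a n * gaussK d ((n : ℝ) + 1) x :=
    fun x => tsum_nonneg fun n => hterm0 n x
  refine Bnorm_le ?_ (fun x => ?_) (fun x => ?_)
  · calc ∫⁻ x, ENNReal.ofReal |∑' n : ℕ, a n * gaussK d ((n : ℝ) + 1) x|
        = ∫⁻ x, ∑' n : ℕ, ENNReal.ofReal (a n) * ENNReal.ofReal (gaussK d ((n : ℝ) + 1) x) := by
          refine lintegral_congr fun x => ?_
          rw [abs_of_nonneg (hnn x), ENNReal.ofReal_tsum_of_nonneg (fun n => hterm0 n x) (hsum x)]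
          refine tsum_congr fun n => ?_
          rw [ENNReal.ofReal_mul (ha n)]
      _ = ∑' n : ℕ, ENNReal.ofReal (a n) := by
          rw [lintegral_tsum]
          · refine tsum_congr fun n => ?_
            rw [lintegral_const_mul _ ((continuous_gaussK _).measurable.ennreal_ofReal),
              lintegral_gaussK (hpos n), mul_one]
          · intro n
            exact (((continuous_gaussK _).measurable.ennreal_ofReal).const_mul _).aemeasurable
      _ = ENNReal.ofReal S := by
          rw [← ENNReal.ofReal_tsum_of_nonneg ha hS.summable, hS.tsum_eq]
      _ ≤ _ := ENNReal.ofReal_le_ofReal (by nlinarith)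
  · refine (tsum_of_norm_bounded (hS.mul_right C) fun n => hterm n x).trans ?_
    nlinarith
  · rw [abs_of_nonneg (hnn x), ← tsum_mul_left]
    have h1 : ∀ n : ℕ, ‖‖x‖ ^ d * (a n * gaussK d ((n : ℝ) + 1) x)‖ ≤ a n * C := by
      intro n
      rw [Real.norm_of_nonneg (mul_nonneg (by positivity) (hterm0 n x)), mul_left_comm]
      exact mul_le_mul_of_nonneg_left (hgx n x) (ha n)
    refine (le_abs_self _).trans ((tsum_of_norm_bounded (hS.mul_right C) h1).trans ?_)
    nlinarith

/-! ### Moments of a rotationally invariant function -/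

lemma integrable_brk (d : ℕ) :
    Integrable (fun x : EuclideanSpace ℝ (Fin d) => (brk 1 x ^ (d + 1))⁻¹) := by
  have h := integrable_rpow_neg_one_add_norm_sq (E := EuclideanSpace ℝ (Fin d)) (μ := volume)
    (r := (d : ℝ) + 1) (by simp)
  refine h.congr (Filter.Eventually.of_forall fun x => ?_)
  simp only [brk]
  rw [Real.sqrt_eq_rpow, ← Real.rpow_natCast _ (d + 1), ← Real.rpow_mul (by positivity),
    ← Real.rpow_neg (by positivity)]
  congr 1; push_cast; ring

lemma integrable_of_brk {f : EuclideanSpace ℝ (Fin d) → ℝ} (hf : Continuous f) (K : ℝ)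
    (h : ∀ y, |f y| ≤ K * (brk 1 y ^ (d + 1))⁻¹) : Integrable f :=
  ((integrable_brk d).const_mul K).mono' hf.aestronglyMeasurable (Filter.Eventually.of_forall h)

lemma rho_le_brk {ρ : EuclideanSpace ℝ (Fin d) → ℝ}
    (hρ : ∀ x, |ρ x| ≤ (1 + ‖x‖) ^ (-((d : ℝ) + 4))) (x : EuclideanSpace ℝ (Fin d)) :
    |ρ x| ≤ (brk 1 x ^ (d + 4))⁻¹ := by
  refine (hρ x).trans ?_
  have h1 : brk 1 x ≤ 1 + ‖x‖ := by
    refine Real.sqrt_le_iff.2 ⟨by positivity, ?_⟩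
    nlinarith [norm_nonneg x]
  have hb := brk_pos one_pos x
  rw [Real.rpow_neg (by positivity)]
  have e : (1 + ‖x‖) ^ ((d : ℝ) + 4) = (1 + ‖x‖) ^ (d + 4) := by
    rw [← Real.rpow_natCast]; push_cast; rfl
  rw [e]
  gcongr

lemma rho_mul_pow_le {ρ : EuclideanSpace ℝ (Fin d) → ℝ}
    (hρ : ∀ x, |ρ x| ≤ (brk 1 x ^ (d + 4))⁻¹) {j : ℕ} (hj : j ≤ 3)
    (y : EuclideanSpace ℝ (Fin d)) : |ρ y| * ‖y‖ ^ j ≤ (brk 1 y ^ (d + 1))⁻¹ := by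
  have hb := one_le_brk le_rfl y
  have hb0 := brk_pos one_pos y
  calc |ρ y| * ‖y‖ ^ j ≤ (brk 1 y ^ (d + 4))⁻¹ * brk 1 y ^ j := by
        gcongr
        · exact hρ y
        · exact norm_le_brk zero_le_one y
    _ ≤ (brk 1 y ^ (d + 4))⁻¹ * brk 1 y ^ 3 := by gcongr
    _ = _ := by rw [show d + 4 = d + 1 + 3 by ring, pow_add _ (d + 1)]; field_simp

lemma integral_rho_inner {ρ : EuclideanSpace ℝ (Fin d) → ℝ}
    (hrot : ∀ x y, ‖x‖ = ‖y‖ → ρ x = ρ y) (x : EuclideanSpace ℝ (Fin d)) :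
    ∫ y, ρ y * inner ℝ x y = 0 := by
  have h := integral_neg_eq_self (fun y => ρ y * inner ℝ x y) volume
  have e : ∀ y, ρ (-y) * inner ℝ x (-y) = -(ρ y * inner ℝ x y) := by
    intro y
    rw [hrot (-y) y (norm_neg y), inner_neg_right]; ring
  simp_rw [e] at h
  rw [integral_neg] at h
  linarith

/-- Isotropy of the second moments. -/
lemma integral_rho_inner_sq {ρ : EuclideanSpace ℝ (Fin d) → ℝ} (hc : Continuous ρ)
    (hrot : ∀ x y, ‖x‖ = ‖y‖ → ρ x = ρ y) (hρ : ∀ x, |ρ x| ≤ (brk 1 x ^ (d + 4))⁻¹)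
    (x : EuclideanSpace ℝ (Fin d)) :
    d * ∫ y, ρ y * inner ℝ x y ^ 2 = ‖x‖ ^ 2 * ∫ y, ρ y * ‖y‖ ^ 2 := by
  have hq : ∀ v w : EuclideanSpace ℝ (Fin d), ‖v‖ = ‖w‖ →
      ∫ y, ρ y * inner ℝ v y ^ 2 = ∫ y, ρ y * inner ℝ w y ^ 2 := by
    intro v w hvw
    let R := (ℝ ∙ (v - w))ᗮ.reflection
    have hR : R v = w := Submodule.reflection_sub hvw
    rw [← R.measurePreserving.integral_comp' (f := R.toMeasurableEquiv)
      (fun y => ρ y * inner ℝ w y ^ 2)]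
    refine integral_congr_ae (Filter.Eventually.of_forall fun y => ?_)
    simp only [LinearIsometryEquiv.coe_toMeasurableEquiv]
    rw [← hR, R.inner_map_map, hrot (R y) y (R.norm_map y)]
  have hInt : ∀ i : Fin d, Integrable (fun y : EuclideanSpace ℝ (Fin d) => ρ y * y i ^ 2) := by
    intro i
    refine integrable_of_brk (by fun_prop) 1 fun y => ?_
    rw [one_mul, abs_mul, abs_pow]
    refine le_trans ?_ (rho_mul_pow_le hρ (j := 2) (by norm_num) y)
    gcongr
    exact PiLp.norm_apply_le y i
  have hi : ∀ i : Fin d, ∫ y, ρ y * inner ℝ x y ^ 2 = ‖x‖ ^ 2 * ∫ y, ρ y * y i ^ 2 := by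
    intro i
    rw [hq x (EuclideanSpace.single i ‖x‖) (by simp), ← integral_const_mul]
    refine integral_congr_ae (Filter.Eventually.of_forall fun y => ?_)
    simp only [EuclideanSpace.inner_single_left, conj_trivial]
    ring
  calc (d : ℝ) * ∫ y, ρ y * inner ℝ x y ^ 2 = ∑ i : Fin d, ‖x‖ ^ 2 * ∫ y, ρ y * y i ^ 2 := by
        simp_rw [← hi]; simp
    _ = ‖x‖ ^ 2 * ∫ y, ρ y * ‖y‖ ^ 2 := by
        rw [← Finset.mul_sum, ← integral_finsetSum _ fun i _ => hInt i]
        simp_rw [EuclideanSpace.real_norm_sq_eq, Finset.mul_sum]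

/-! ### The pointwise estimate -/

lemma abs_add_mul_le {X m Y a b c : ℝ} (hX : |X| ≤ a) (hm : |m| ≤ b) (hY : |Y| ≤ c)
    (hb : 0 ≤ b) : |X + m * Y| ≤ a + b * c := by
  refine (abs_add_le _ _).trans (add_le_add hX ?_)
  rw [abs_mul]
  exact mul_le_mul hm hY (abs_nonneg _) hb

lemma inv_pow_mul_le {a b : ℝ} (ha : 1 ≤ a) (hb : 1 ≤ b) {d : ℕ} (hd : 2 ≤ d) :
    (a ^ 3)⁻¹ * (b ^ (d - 2))⁻¹ ≤ (a ^ (d + 1))⁻¹ + (b ^ (d + 1))⁻¹ := by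
  have ha0 : 0 < a := by linarith
  have hb0 : 0 < b := by linarith
  have hA : 0 ≤ (a ^ (d + 1))⁻¹ := by positivity
  have hB : 0 ≤ (b ^ (d + 1))⁻¹ := by positivity
  rcases le_total a b with h | h
  · have : (a ^ 3)⁻¹ * (b ^ (d - 2))⁻¹ ≤ (a ^ 3)⁻¹ * (a ^ (d - 2))⁻¹ := by gcongr
    rw [← mul_inv, ← mul_inv, ← pow_add, show 3 + (d - 2) = d + 1 by omega] at this
    rw [← mul_inv]
    linarith
  · have : (a ^ 3)⁻¹ * (b ^ (d - 2))⁻¹ ≤ (b ^ 3)⁻¹ * (b ^ (d - 2))⁻¹ := by gcongr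
    rw [← mul_inv, ← mul_inv, ← pow_add, show 3 + (d - 2) = d + 1 by omega] at this
    rw [← mul_inv]
    linarith

/-- `weighted_tsum_le` with the exponent `m = k + 3` given directly. -/
lemma weighted_tsum_le_sub {μ : ℝ} (h0 : 0 ≤ μ) (h1 : μ ≤ 1) (x : EuclideanSpace ℝ (Fin d))
    (m : ℕ) (hm : 3 ≤ m) {K : ℝ} {f : ℕ → ℝ}
    (hf : ∀ n, |f n| ≤ K * (brk ((n : ℝ) + 1) x ^ m)⁻¹) :
    Summable (fun n => μ ^ (n + 1) * f n) ∧
    |∑' n, μ ^ (n + 1) * f n| ≤ 6 * K * μ * (brk 1 x ^ (m - 2))⁻¹ := by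
  obtain ⟨k, rfl⟩ := Nat.exists_eq_add_of_le' hm
  exact weighted_tsum_le h0 h1 x k hf

/-- The Taylor remainders summed over time, with `r` in the role of `ρ(y)`. For `|y| ≤ |x|/2` the
third-order bound gives `|y|³ brk(x)^{-(d+1)}`; for `|y| > |x|/2` each term of the expansion is
bounded separately, and the decay of `ρ` supplies the missing powers. -/
lemma remainder_bound (d : ℕ) (hd : 3 ≤ d) : ∃ C : ℝ, 0 ≤ C ∧
    ∀ μ : ℝ, 0 ≤ μ → μ ≤ 1 → ∀ x y : EuclideanSpace ℝ (Fin d),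
      ∀ r : ℝ, |r| ≤ (brk 1 y ^ (d + 4))⁻¹ →
      |r * (∑' n : ℕ, μ ^ (n + 1) * taylorRem d ((n : ℝ) + 1) x y)| ≤
        C * μ * (brk 1 x ^ (d + 1))⁻¹ * ((brk 1 y ^ (d + 1))⁻¹ + (brk 1 (x - y) ^ (d + 1))⁻¹) := by
  obtain ⟨C₁, hC₁0, hC₁⟩ := taylorRem_le_of_near d
  obtain ⟨C₂, hC₂0, hC₂⟩ := taylorRem_le_of_far d
  refine ⟨6 * C₁ + 252 * C₂ + 6 * C₂ * 2 ^ (d + 1), by positivity,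
    fun μ hμ0 hμ1 x y r hr => ?_⟩
  have hb := brk_pos one_pos x
  have hB := brk_pos one_pos y
  have hZ := brk_pos one_pos (x - y)
  have hb1 := one_le_brk le_rfl x
  have hB1 := one_le_brk le_rfl y
  have hZ1 := one_le_brk le_rfl (x - y)
  have hyB := norm_le_brk zero_le_one y
  have hpos : ∀ n : ℕ, (0 : ℝ) < (n : ℝ) + 1 := fun n => by positivity
  rw [abs_mul]
  have hsplit : (brk 1 y ^ (d + 4))⁻¹ * brk 1 y ^ 3 = (brk 1 y ^ (d + 1))⁻¹ := by
    rw [show d + 4 = d + 1 + 3 by ring, pow_add _ (d + 1)]; field_simp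
  rcases le_or_gt (2 * ‖y‖) ‖x‖ with hxy | hxy
  · have h := (weighted_tsum_le_sub hμ0 hμ1 x (d + 3) (by omega)
      (fun n => hC₁ ((n : ℝ) + 1) (hpos n) x y hxy)).2
    rw [show d + 3 - 2 = d + 1 by omega] at h
    calc _ ≤ (brk 1 y ^ (d + 4))⁻¹ * (6 * (C₁ * ‖y‖ ^ 3) * μ * (brk 1 x ^ (d + 1))⁻¹) := by gcongr
      _ ≤ (brk 1 y ^ (d + 4))⁻¹ * (6 * (C₁ * brk 1 y ^ 3) * μ * (brk 1 x ^ (d + 1))⁻¹) := by gcongr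
      _ = 6 * C₁ * μ * (brk 1 x ^ (d + 1))⁻¹ * ((brk 1 y ^ (d + 4))⁻¹ * brk 1 y ^ 3) := by ring
      _ = (6 * C₁ + 0 + 0) * μ * (brk 1 x ^ (d + 1))⁻¹ * ((brk 1 y ^ (d + 1))⁻¹ + 0) := by
          rw [hsplit]; ring
      _ ≤ _ := by gcongr <;> positivity
  · have hbB : brk 1 x ≤ 2 * brk 1 y := brk_le_two_mul zero_le_one hxy.le
    set b := brk 1 x with hbdef
    set B := brk 1 y with hBdef
    set Z := brk 1 (x - y) with hZdef
    have s1 := weighted_tsum_le_sub hμ0 hμ1 (x - y) d hd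
      (fun n => (hC₂ ((n : ℝ) + 1) (hpos n) (x - y) y).1)
    have s2 := weighted_tsum_le_sub hμ0 hμ1 x d hd
      (K := 3 * C₂ * (1 + ‖y‖ * b⁻¹ + ‖y‖ ^ 2 * (b ^ 2)⁻¹))
      (f := fun n => taylorRem d ((n : ℝ) + 1) x y - gaussK d ((n : ℝ) + 1) (x - y)) (fun n => by
        refine ((hC₂ ((n : ℝ) + 1) (hpos n) x y).2.2.2).trans ?_
        have hbn := brk_pos (hpos n) x
        have hmono : b ≤ brk ((n : ℝ) + 1) x :=
          brk_mono (by linarith [(Nat.cast_nonneg n : (0 : ℝ) ≤ n)]) x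
        have e1 : (brk ((n : ℝ) + 1) x ^ (d + 1))⁻¹ ≤ b⁻¹ * (brk ((n : ℝ) + 1) x ^ d)⁻¹ := by
          rw [pow_succ, mul_inv, mul_comm]; gcongr
        have e2 : (brk ((n : ℝ) + 1) x ^ (d + 2))⁻¹ ≤
            (b ^ 2)⁻¹ * (brk ((n : ℝ) + 1) x ^ d)⁻¹ := by
          rw [pow_add, mul_inv, mul_comm]; gcongr
        calc _ ≤ 3 * C₂ * ((brk ((n : ℝ) + 1) x ^ d)⁻¹
                + ‖y‖ * (b⁻¹ * (brk ((n : ℝ) + 1) x ^ d)⁻¹)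
                + ‖y‖ ^ 2 * ((b ^ 2)⁻¹ * (brk ((n : ℝ) + 1) x ^ d)⁻¹)) := by gcongr
          _ = _ := by ring)
    have hT : ∑' n : ℕ, μ ^ (n + 1) * taylorRem d ((n : ℝ) + 1) x y =
        (∑' n : ℕ, μ ^ (n + 1) * gaussK d ((n : ℝ) + 1) (x - y)) +
        ∑' n : ℕ, μ ^ (n + 1) *
          (taylorRem d ((n : ℝ) + 1) x y - gaussK d ((n : ℝ) + 1) (x - y)) := by
      rw [← s1.1.tsum_add s2.1]
      refine tsum_congr fun n => ?_
      ring
    have f1 : (B ^ (d + 4))⁻¹ * (6 * C₂ * μ * (Z ^ (d - 2))⁻¹) ≤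
        6 * C₂ * 2 ^ (d + 1) * μ * (b ^ (d + 1))⁻¹ * ((B ^ (d + 1))⁻¹ + (Z ^ (d + 1))⁻¹) := by
      have g1 : (B ^ (d + 1))⁻¹ ≤ 2 ^ (d + 1) * (b ^ (d + 1))⁻¹ := by
        rw [← div_eq_mul_inv, inv_eq_one_div, div_le_div_iff₀ (by positivity) (by positivity),
          one_mul, ← mul_pow]
        gcongr
      calc (B ^ (d + 4))⁻¹ * (6 * C₂ * μ * (Z ^ (d - 2))⁻¹)
          = 6 * C₂ * μ * (B ^ (d + 1))⁻¹ * ((B ^ 3)⁻¹ * (Z ^ (d - 2))⁻¹) := by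
            rw [show d + 4 = d + 1 + 3 by ring, pow_add _ (d + 1), mul_inv]; ring
        _ ≤ 6 * C₂ * μ * (2 ^ (d + 1) * (b ^ (d + 1))⁻¹) *
            ((B ^ (d + 1))⁻¹ + (Z ^ (d + 1))⁻¹) := by
            have := inv_pow_mul_le hB1 hZ1 (d := d) (by omega)
            gcongr
        _ = _ := by ring
    have f2 : (B ^ (d + 4))⁻¹ *
        (6 * (3 * C₂ * (1 + ‖y‖ * b⁻¹ + ‖y‖ ^ 2 * (b ^ 2)⁻¹)) * μ * (b ^ (d - 2))⁻¹) ≤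
        252 * C₂ * μ * (b ^ (d + 1))⁻¹ * (B ^ (d + 1))⁻¹ := by
      have g1 : (1 + ‖y‖ * b⁻¹ + ‖y‖ ^ 2 * (b ^ 2)⁻¹) * (b ^ (d - 2))⁻¹ =
          (b ^ 3 + ‖y‖ * b ^ 2 + ‖y‖ ^ 2 * b) * (b ^ (d + 1))⁻¹ := by
        rw [show d + 1 = d - 2 + 3 by omega, pow_add _ (d - 2)]; field_simp
      have g2 : b ^ 3 + ‖y‖ * b ^ 2 + ‖y‖ ^ 2 * b ≤ 14 * B ^ 3 := by
        calc b ^ 3 + ‖y‖ * b ^ 2 + ‖y‖ ^ 2 * b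
            ≤ (2 * B) ^ 3 + B * (2 * B) ^ 2 + B ^ 2 * (2 * B) := by gcongr
          _ = _ := by ring
      calc _ = 18 * C₂ * μ * (B ^ (d + 4))⁻¹ *
            ((1 + ‖y‖ * b⁻¹ + ‖y‖ ^ 2 * (b ^ 2)⁻¹) * (b ^ (d - 2))⁻¹) := by ring
        _ ≤ 18 * C₂ * μ * (B ^ (d + 4))⁻¹ * ((14 * B ^ 3) * (b ^ (d + 1))⁻¹) := by
            rw [g1]; gcongr
        _ = 252 * C₂ * μ * (b ^ (d + 1))⁻¹ * ((B ^ (d + 4))⁻¹ * B ^ 3) := by ring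
        _ = _ := by rw [hsplit]
    rw [hT]
    calc _ ≤ (B ^ (d + 4))⁻¹ * ((6 * C₂ * μ * (Z ^ (d - 2))⁻¹) +
          (6 * (3 * C₂ * (1 + ‖y‖ * b⁻¹ + ‖y‖ ^ 2 * (b ^ 2)⁻¹)) * μ * (b ^ (d - 2))⁻¹)) := by
          gcongr
          exact (abs_add_le _ _).trans (add_le_add s1.2 s2.2)
      _ ≤ 6 * C₂ * 2 ^ (d + 1) * μ * (b ^ (d + 1))⁻¹ * ((B ^ (d + 1))⁻¹ + (Z ^ (d + 1))⁻¹) +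
          252 * C₂ * μ * (b ^ (d + 1))⁻¹ * (B ^ (d + 1))⁻¹ := by
          rw [mul_add]; exact add_le_add f1 f2
      _ ≤ _ := by
          have p1 : 0 ≤ 252 * C₂ * μ * (b ^ (d + 1))⁻¹ * (Z ^ (d + 1))⁻¹ := by positivity
          have p2 : 0 ≤ 6 * C₁ * μ * (b ^ (d + 1))⁻¹ * ((B ^ (d + 1))⁻¹ + (Z ^ (d + 1))⁻¹) := by
            positivity
          linarith

/-- Weights of the Gaussian mixture obtained from `∑ μⁿ (φ_{n+1} - φ_n)` by summation by parts. -/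
noncomputable def abelWeight (μ : ℝ) (n : ℕ) : ℝ := if n = 0 then μ else (1 - μ) * μ ^ n

lemma abelWeight_nonneg {μ : ℝ} (h0 : 0 ≤ μ) (h1 : μ ≤ 1) (n : ℕ) : 0 ≤ abelWeight μ n := by
  unfold abelWeight
  split_ifs
  · exact h0
  · exact mul_nonneg (by linarith) (pow_nonneg h0 n)

lemma abelWeight_hasSum {μ : ℝ} (h0 : 0 ≤ μ) (h1 : μ ≤ 1) :
    ∃ S, HasSum (abelWeight μ) S ∧ S ≤ 2 * μ := by
  rcases h1.lt_or_eq with h | rfl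
  · have hg := (hasSum_geometric_of_lt_one h0 h).mul_left ((1 - μ) * μ)
    have hg' : HasSum (fun n => abelWeight μ (n + 1)) μ := by
      have e : (1 - μ) * μ * (1 - μ)⁻¹ = μ := by
        have : 1 - μ ≠ 0 := by linarith
        field_simp
      rw [e] at hg
      convert! hg using 1
      ext n
      simp only [abelWeight, Nat.add_eq_zero_iff, one_ne_zero, and_false, if_false]
      ring
    refine ⟨μ + μ, ?_, by linarith⟩
    have := hg'.zero_add
    simpa [abelWeight] using this
  · refine ⟨1, ?_, by norm_num⟩
    convert! hasSum_ite_eq (0 : ℕ) (1 : ℝ) using 1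
    ext n
    simp [abelWeight]

/-- Summation by parts: `∑ μⁿ (φ_{n+1} - φ_n)` telescopes, leaving `-μ φ_1` and a remainder with the
small factor `1 - μ`. -/
lemma abs_tsum_diff_le {μ : ℝ} (h0 : 0 ≤ μ) (h1 : μ ≤ 1) {f : ℕ → ℝ} (hf0 : ∀ n, 0 ≤ f n)
    (hs : Summable fun n => μ ^ (n + 1) * f n) (hs' : Summable fun n => μ ^ (n + 1) * f (n + 1))
    (hw : Summable fun n => abelWeight μ n * f n) :
    |∑' n, μ ^ (n + 1) * (f (n + 1) - f n)| ≤ ∑' n, abelWeight μ n * f n := by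
  have e1 : ∑' n, μ ^ (n + 1) * (f (n + 1) - f n) =
      (∑' n, μ ^ (n + 1) * f (n + 1)) - ∑' n, μ ^ (n + 1) * f n := by
    rw [← hs'.tsum_sub hs]
    exact tsum_congr fun n => by ring
  have e2 : ∑' n, abelWeight μ n * f n =
      μ * f 0 + (1 - μ) * ∑' n, μ ^ (n + 1) * f (n + 1) := by
    rw [hw.tsum_eq_zero_add, ← tsum_mul_left]
    congr 1
    exact tsum_congr fun n => by simp [abelWeight]; ring
  have e3 : ∑' n, μ ^ (n + 1) * f n = μ * f 0 + μ * ∑' n, μ ^ (n + 1) * f (n + 1) := by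
    rw [hs.tsum_eq_zero_add, ← tsum_mul_left]
    congr 1
    · simp
    · exact tsum_congr fun n => by ring
  have hP : 0 ≤ ∑' n, μ ^ (n + 1) * f (n + 1) :=
    tsum_nonneg fun n => mul_nonneg (pow_nonneg h0 _) (hf0 _)
  rw [e1, e2, e3, abs_le]
  have := mul_nonneg h0 (hf0 0)
  constructor <;> nlinarith

set_option maxHeartbeats 800000 in
/-- The decomposition behind part (b): up to an error decaying like `|x|^{-(d+1)}`, hence integrable,
`ρ ⋆ G_μ` is a bounded multiple of `∑ μⁿ (φ_{n+1} - φ_n)`, which is dominated by a Gaussian mixture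
of total mass at most `2μ`. -/
lemma pointwise_bound (d : ℕ) (hd : 3 ≤ d) : ∃ C : ℝ, 0 ≤ C ∧
    ∀ ρ : EuclideanSpace ℝ (Fin d) → ℝ, Continuous ρ →
      (∀ x y, ‖x‖ = ‖y‖ → ρ x = ρ y) →
      (∀ x, |ρ x| ≤ (brk 1 x ^ (d + 4))⁻¹) →
      (∫ x, ρ x) = 0 →
      ∀ μ : ℝ, 0 ≤ μ → μ ≤ 1 → ∀ x,
        |convol d ρ (Gmu d μ) x| ≤ C * μ * (brk 1 x ^ (d + 1))⁻¹ +
          C * ∑' n : ℕ, abelWeight μ n * gaussK d ((n : ℝ) + 1) x := by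
  obtain ⟨C₁, hC₁0, hC₁⟩ := remainder_bound d hd
  obtain ⟨C₂, hC₂0, hC₂⟩ := taylorRem_le_of_far d
  obtain ⟨C₃, hC₃0, hC₃⟩ := gaussK_time_diff_le d
  obtain ⟨C₄, hC₄0, hC₄⟩ := mixture_bound d
  set I : ℝ := ∫ y : EuclideanSpace ℝ (Fin d), (brk 1 y ^ (d + 1))⁻¹ with hI
  have hI0 : 0 ≤ I := integral_nonneg fun y => by unfold brk; positivity
  refine ⟨2 * C₁ * I + 6 * C₃ * I + I, by positivity,
    fun ρ hc hrot hρ hzero μ hμ0 hμ1 x => ?_⟩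
  have hpos : ∀ n : ℕ, (0 : ℝ) < (n : ℝ) + 1 := fun n => by positivity
  have hd1 : (1 : ℝ) ≤ d := by exact_mod_cast (by omega : 1 ≤ d)
  have hb := brk_pos one_pos x
  have hb1 := one_le_brk le_rfl x
  have sG : ∀ z : EuclideanSpace ℝ (Fin d), _ := fun z =>
    weighted_tsum_le_sub hμ0 hμ1 z d hd (fun n => (hC₂ ((n : ℝ) + 1) (hpos n) z z).1)
  have sA := (weighted_tsum_le_sub hμ0 hμ1 x (d + 2) (by omega)
    (fun n => (hC₂ ((n : ℝ) + 1) (hpos n) x x).2.1)).1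
  have sB := (weighted_tsum_le_sub hμ0 hμ1 x (d + 4) (by omega)
    (fun n => (hC₂ ((n : ℝ) + 1) (hpos n) x x).2.2.1)).1
  set A : ℝ := ∑' n : ℕ, μ ^ (n + 1) * (gaussK d ((n : ℝ) + 1) x / ((n : ℝ) + 1)) with hA
  set B : ℝ := ∑' n : ℕ, μ ^ (n + 1) * (gaussK d ((n : ℝ) + 1) x / ((n : ℝ) + 1) ^ 2) with hB
  set M : ℝ := ∫ y, ρ y * ‖y‖ ^ 2 with hM
  -- The expansion of `G_μ(x - y)` in `y`.
  have hT : ∀ y, Gmu d μ (x - y) = (∑' n : ℕ, μ ^ (n + 1) * taylorRem d ((n : ℝ) + 1) x y)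
      + Gmu d μ x + inner ℝ x y * A + (inner ℝ x y ^ 2 * B - ‖y‖ ^ 2 * A) / 2 := by
    intro y
    have H := (((((sG (x - y)).1.hasSum.sub (sG x).1.hasSum).sub
      (sA.hasSum.mul_left (inner ℝ x y))).sub
      (((sB.hasSum.mul_left (inner ℝ x y ^ 2)).sub
        (sA.hasSum.mul_left (‖y‖ ^ 2))).div_const 2))).tsum_eq
    have e : ∑' n : ℕ, μ ^ (n + 1) * taylorRem d ((n : ℝ) + 1) x y =
        Gmu d μ (x - y) - Gmu d μ x - inner ℝ x y * A
          - (inner ℝ x y ^ 2 * B - ‖y‖ ^ 2 * A) / 2 := by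
      unfold Gmu
      rw [← H]
      refine tsum_congr fun n => ?_
      unfold taylorRem
      ring
    rw [e]; ring
  -- Integrability of the terms against `ρ`.
  have i0 : Integrable ρ := integrable_of_brk hc 1 fun y => by
    simpa using rho_mul_pow_le hρ (j := 0) (by norm_num) y
  have i1 : Integrable (fun y => ρ y * inner ℝ x y) := by
    refine integrable_of_brk (by fun_prop) ‖x‖ fun y => ?_
    have h := rho_mul_pow_le hρ (j := 1) (by norm_num) y
    rw [abs_mul]
    calc |ρ y| * |inner ℝ x y| ≤ |ρ y| * (‖x‖ * ‖y‖) := by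
          gcongr; exact abs_real_inner_le_norm x y
      _ = ‖x‖ * (|ρ y| * ‖y‖ ^ 1) := by ring
      _ ≤ _ := by gcongr
  have i2 : Integrable (fun y => ρ y * inner ℝ x y ^ 2) := by
    refine integrable_of_brk (by fun_prop) (‖x‖ ^ 2) fun y => ?_
    have h := rho_mul_pow_le hρ (j := 2) (by norm_num) y
    rw [abs_mul, abs_pow]
    calc |ρ y| * |inner ℝ x y| ^ 2 ≤ |ρ y| * (‖x‖ * ‖y‖) ^ 2 := by
          gcongr; exact abs_real_inner_le_norm x y
      _ = ‖x‖ ^ 2 * (|ρ y| * ‖y‖ ^ 2) := by ring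
      _ ≤ _ := by gcongr
  have i3 : Integrable (fun y => ρ y * ‖y‖ ^ 2) := by
    refine integrable_of_brk (by fun_prop) 1 fun y => ?_
    have h := rho_mul_pow_le hρ (j := 2) (by norm_num) y
    rwa [abs_mul, abs_of_nonneg (by positivity : 0 ≤ ‖y‖ ^ 2), one_mul]
  have hMI : |M| ≤ I := by
    change ‖∫ y, ρ y * ‖y‖ ^ 2‖ ≤ I
    refine norm_integral_le_of_norm_le (integrable_brk d) (Filter.Eventually.of_forall fun y => ?_)
    have h := rho_mul_pow_le hρ (j := 2) (by norm_num) y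
    rwa [Real.norm_eq_abs, abs_mul, abs_of_nonneg (by positivity : 0 ≤ ‖y‖ ^ 2)]
  have hIshift : Integrable (fun y : EuclideanSpace ℝ (Fin d) =>
      (brk 1 (x - y) ^ (d + 1))⁻¹) := (integrable_brk d).comp_sub_left x
  have hcontR : Continuous (fun y => ∑' n : ℕ, μ ^ (n + 1) * taylorRem d ((n : ℝ) + 1) x y) := by
    have hcG : Continuous (Gmu d μ) := by
      have s0 := (weighted_tsum_le_sub hμ0 hμ1 (0 : EuclideanSpace ℝ (Fin d)) d hd
        (K := C₂) (f := fun n => C₂ * (brk ((n : ℝ) + 1) (0 : EuclideanSpace ℝ (Fin d)) ^ d)⁻¹)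
        (fun n => by
          have := brk_pos (hpos n) (0 : EuclideanSpace ℝ (Fin d))
          rw [abs_of_nonneg (by positivity)])).1
      refine continuous_tsum (fun n => (continuous_gaussK _).const_mul _) s0 fun n z => ?_
      have hz := brk_pos (hpos n) (0 : EuclideanSpace ℝ (Fin d))
      rw [norm_mul, Real.norm_of_nonneg (pow_nonneg hμ0 _)]
      refine mul_le_mul_of_nonneg_left ?_ (pow_nonneg hμ0 _)
      refine (hC₂ ((n : ℝ) + 1) (hpos n) z z).1.trans ?_
      have : brk ((n : ℝ) + 1) (0 : EuclideanSpace ℝ (Fin d)) ≤ brk ((n : ℝ) + 1) z := by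
        unfold brk
        apply Real.sqrt_le_sqrt
        simp
      gcongr
    have e : (fun y => ∑' n : ℕ, μ ^ (n + 1) * taylorRem d ((n : ℝ) + 1) x y) = fun y =>
        Gmu d μ (x - y) - Gmu d μ x - inner ℝ x y * A
          - (inner ℝ x y ^ 2 * B - ‖y‖ ^ 2 * A) / 2 := by
      ext y; rw [hT y]; ring
    rw [e]
    fun_prop
  have hdom : Integrable (fun y : EuclideanSpace ℝ (Fin d) => C₁ * μ * (brk 1 x ^ (d + 1))⁻¹ *
      ((brk 1 y ^ (d + 1))⁻¹ + (brk 1 (x - y) ^ (d + 1))⁻¹)) :=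
    ((integrable_brk d).add hIshift).const_mul _
  have hle : ∀ y, ‖ρ y * (∑' n : ℕ, μ ^ (n + 1) * taylorRem d ((n : ℝ) + 1) x y)‖ ≤
      C₁ * μ * (brk 1 x ^ (d + 1))⁻¹ *
        ((brk 1 y ^ (d + 1))⁻¹ + (brk 1 (x - y) ^ (d + 1))⁻¹) :=
    fun y => hC₁ μ hμ0 hμ1 x y (ρ y) (hρ y)
  have iR : Integrable
      (fun y => ρ y * (∑' n : ℕ, μ ^ (n + 1) * taylorRem d ((n : ℝ) + 1) x y)) :=
    hdom.mono' (hc.mul hcontR).aestronglyMeasurable (Filter.Eventually.of_forall hle)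
  have hR : |∫ y, ρ y * (∑' n : ℕ, μ ^ (n + 1) * taylorRem d ((n : ℝ) + 1) x y)| ≤
      2 * C₁ * I * μ * (brk 1 x ^ (d + 1))⁻¹ := by
    refine (norm_integral_le_of_norm_le hdom (Filter.Eventually.of_forall hle)).trans
      (le_of_eq ?_)
    rw [integral_const_mul, integral_add (integrable_brk d) hIshift,
      integral_sub_left_eq_self (fun y : EuclideanSpace ℝ (Fin d) => (brk 1 y ^ (d + 1))⁻¹)
        volume x, ← hI]
    ring
  -- The surviving second-order term is `(M / d) ∑ μⁿ ∂ₜφ_n(x)`.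
  have hconv : convol d ρ (Gmu d μ) x =
      (∫ y, ρ y * (∑' n : ℕ, μ ^ (n + 1) * taylorRem d ((n : ℝ) + 1) x y)) +
        M / d * (‖x‖ ^ 2 / 2 * B - d / 2 * A) := by
    have e : ∀ y, ρ y * Gmu d μ (x - y) =
        ρ y * (∑' n : ℕ, μ ^ (n + 1) * taylorRem d ((n : ℝ) + 1) x y) +
        (ρ y * Gmu d μ x + (ρ y * inner ℝ x y * A +
          (ρ y * inner ℝ x y ^ 2 * (B / 2) - ρ y * ‖y‖ ^ 2 * (A / 2)))) := by
      intro y; rw [hT y]; ring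
    unfold convol
    simp_rw [e]
    have j3 : Integrable (fun y => ρ y * inner ℝ x y ^ 2 * (B / 2) - ρ y * ‖y‖ ^ 2 * (A / 2)) :=
      (i2.mul_const _).sub (i3.mul_const _)
    have j2 : Integrable (fun y => ρ y * inner ℝ x y * A +
        (ρ y * inner ℝ x y ^ 2 * (B / 2) - ρ y * ‖y‖ ^ 2 * (A / 2))) := (i1.mul_const _).add j3
    have j1 : Integrable (fun y => ρ y * Gmu d μ x + (ρ y * inner ℝ x y * A +
        (ρ y * inner ℝ x y ^ 2 * (B / 2) - ρ y * ‖y‖ ^ 2 * (A / 2)))) := (i0.mul_const _).add j2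
    rw [integral_add iR j1, integral_add (i0.mul_const _) j2, integral_add (i1.mul_const _) j3,
      integral_sub (i2.mul_const _) (i3.mul_const _), integral_mul_const, integral_mul_const,
      integral_mul_const, integral_mul_const, hzero, integral_rho_inner hrot x]
    have h2 := integral_rho_inner_sq hc hrot hρ x
    have h2' : ∫ y, ρ y * inner ℝ x y ^ 2 = ‖x‖ ^ 2 * M / d := by
      rw [eq_div_iff (by linarith), mul_comm]; exact h2
    rw [h2']
    field_simp
    ring
  -- Replacing the time derivative by a forward difference.
  have sE := weighted_tsum_le_sub hμ0 hμ1 x (d + 4) (by omega)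
    (fun n => hC₃ ((n : ℝ) + 1) (hpos n) x)
  have sD : Summable fun n : ℕ => μ ^ (n + 1) * gaussK d ((n : ℝ) + 1 + 1) x := by
    have := (weighted_tsum_le_sub hμ0 hμ1 x d hd (K := C₂)
      (f := fun n : ℕ => gaussK d ((n : ℝ) + 1 + 1) x) (fun n => by
        refine (hC₂ ((n : ℝ) + 1 + 1) (by positivity) x x).1.trans ?_
        have := brk_pos (hpos n) x
        have : brk ((n : ℝ) + 1) x ≤ brk ((n : ℝ) + 1 + 1) x := brk_mono (by linarith) x
        gcongr)).1
    exact this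
  have hE : ‖x‖ ^ 2 / 2 * B - d / 2 * A =
      (∑' n : ℕ, μ ^ (n + 1) * (gaussK d ((n : ℝ) + 1 + 1) x - gaussK d ((n : ℝ) + 1) x)) -
      ∑' n : ℕ, μ ^ (n + 1) * (gaussK d ((n : ℝ) + 1 + 1) x - gaussK d ((n : ℝ) + 1) x -
        (‖x‖ ^ 2 / (2 * ((n : ℝ) + 1) ^ 2) - d / (2 * ((n : ℝ) + 1))) *
          gaussK d ((n : ℝ) + 1) x) := by
    have sF : Summable fun n : ℕ =>
        μ ^ (n + 1) * (gaussK d ((n : ℝ) + 1 + 1) x - gaussK d ((n : ℝ) + 1) x) := by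
      refine (sD.sub (sG x).1).congr fun n => by ring
    rw [← sF.tsum_sub sE.1, hA, hB, ← tsum_mul_left, ← tsum_mul_left,
      ← (sB.mul_left _).tsum_sub (sA.mul_left _)]
    refine tsum_congr fun n => ?_
    have := hpos n
    field_simp
    ring
  obtain ⟨S, hS, -⟩ := abelWeight_hasSum hμ0 hμ1
  have hw := (hC₄ _ S (abelWeight_nonneg hμ0 hμ1) hS).1 x
  have hF := abs_tsum_diff_le hμ0 hμ1 (f := fun n : ℕ => gaussK d ((n : ℝ) + 1) x)
    (fun n => gaussK_nonneg (hpos n).le x) (sG x).1 (by push_cast; exact sD) hw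
  push_cast at hF
  have hE2 := sE.2
  rw [show d + 4 - 2 = d + 2 by omega] at hE2
  have hdec : (brk 1 x ^ (d + 2))⁻¹ ≤ (brk 1 x ^ (d + 1))⁻¹ := by
    exact inv_anti₀ (by positivity) (pow_le_pow_right₀ hb1 (by omega))
  have hMd : |M / d| ≤ I := by
    rw [abs_div, abs_of_nonneg (by linarith : (0 : ℝ) ≤ d)]
    exact (div_le_self (abs_nonneg _) hd1).trans hMI
  set V := ∑' n : ℕ, abelWeight μ n * gaussK d ((n : ℝ) + 1) x
  have hV0 : 0 ≤ V := (abs_nonneg _).trans hF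
  have hsec : |‖x‖ ^ 2 / 2 * B - d / 2 * A| ≤ V + 6 * C₃ * μ * (brk 1 x ^ (d + 1))⁻¹ := by
    rw [hE]
    refine (abs_sub _ _).trans (add_le_add hF (hE2.trans ?_))
    gcongr
  have p1 : 0 ≤ I * μ * (brk 1 x ^ (d + 1))⁻¹ :=
    mul_nonneg (mul_nonneg hI0 hμ0) (inv_nonneg.2 (pow_nonneg hb.le _))
  have p2 : 0 ≤ (2 * C₁ * I + 6 * C₃ * I) * V :=
    mul_nonneg (add_nonneg (mul_nonneg (mul_nonneg zero_le_two hC₁0) hI0)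
      (mul_nonneg (mul_nonneg (by norm_num) hC₃0) hI0)) hV0
  rw [hconv]
  refine (abs_add_mul_le hR hMd hsec hI0).trans ?_
  clear_value V I
  generalize (brk 1 x ^ (d + 1))⁻¹ = w at p1 ⊢
  linarith only [p1, p2]

end

theorem stmt9 (d : ℕ) (hd : 5 ≤ d) :
    -- (a)
    (∃ C : ℝ, ∀ μ : ℝ, 0 ≤ μ → μ < 1 →
      Continuous (Gmu d μ) ∧ Bnorm d (Gmu d μ) ≤ ENNReal.ofReal (C * μ / (1 - μ))) ∧
    -- (b)
    (∃ C : ℝ, ∀ ρ : EuclideanSpace ℝ (Fin d) → ℝ,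
      Continuous ρ →
      (∀ x y, ‖x‖ = ‖y‖ → ρ x = ρ y) →
      (∀ x, |ρ x| ≤ (1 + ‖x‖) ^ (-((d : ℝ) + 4))) →
      (∫ x, ρ x) = 0 →
      ∀ μ : ℝ, 0 ≤ μ → μ ≤ 1 →
        Bnorm d (convol d ρ (Gmu d μ)) ≤ ENNReal.ofReal (C * μ)) := by
  obtain ⟨C₁, hC₁0, hC₁⟩ := mixture_bound d
  refine ⟨⟨C₁, fun μ h0 h1 => ?_⟩, ?_⟩
  · have hS : HasSum (fun n => μ ^ (n + 1)) (μ * (1 - μ)⁻¹) := by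
      simpa only [pow_succ'] using (hasSum_geometric_of_lt_one h0 h1).mul_left μ
    obtain ⟨-, hcont, hB⟩ := hC₁ _ _ (fun n => pow_nonneg h0 (n + 1)) hS
    refine ⟨hcont, ?_⟩
    rw [mul_div_assoc, div_eq_mul_inv]
    exact hB
  · obtain ⟨C₂, hC₂0, hC₂⟩ := pointwise_bound d (by omega)
    set I : ℝ := ∫ y : EuclideanSpace ℝ (Fin d), (brk 1 y ^ (d + 1))⁻¹ with hI
    have hI0 : 0 ≤ I := integral_nonneg fun y => by unfold brk; positivity
    refine ⟨C₂ * (I + 1) + C₁ * (C₂ * 2), fun ρ hc hrot hρ hzero μ h0 h1 => ?_⟩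
    obtain ⟨S, hS, hS2⟩ := abelWeight_hasSum h0 h1
    have hS0 : 0 ≤ S := hS.nonneg (abelWeight_nonneg h0 h1)
    obtain ⟨-, -, hB⟩ := hC₁ (fun n => C₂ * abelWeight μ n) (C₂ * S)
      (fun n => mul_nonneg hC₂0 (abelWeight_nonneg h0 h1 n)) (hS.mul_left C₂)
    have hw0 : ∀ x : EuclideanSpace ℝ (Fin d), 0 ≤ (brk 1 x ^ (d + 1))⁻¹ :=
      fun x => by unfold brk; positivity
    have hA : Bnorm d (fun x => C₂ * μ * (brk 1 x ^ (d + 1))⁻¹) ≤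
        ENNReal.ofReal (C₂ * (I + 1) * μ) := by
      have hb : ∀ x : EuclideanSpace ℝ (Fin d),
          |C₂ * μ * (brk 1 x ^ (d + 1))⁻¹| = C₂ * μ * (brk 1 x ^ (d + 1))⁻¹ :=
        fun x => abs_of_nonneg (mul_nonneg (by positivity) (hw0 x))
      have hp : 0 ≤ C₂ * μ := by positivity
      have hp' : 0 ≤ C₂ * I * μ := by positivity
      refine Bnorm_le ?_ (fun x => ?_) (fun x => ?_)
      · simp_rw [hb]
        rw [← ofReal_integral_eq_lintegral_ofReal ((integrable_brk d).const_mul _)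
          (Filter.Eventually.of_forall fun x => mul_nonneg hp (hw0 x)), integral_const_mul, ← hI]
        exact ENNReal.ofReal_le_ofReal (by nlinarith)
      · rw [hb]
        have : (brk 1 x ^ (d + 1))⁻¹ ≤ 1 :=
          inv_le_one_of_one_le₀ (one_le_pow₀ (one_le_brk le_rfl x))
        nlinarith
      · rw [hb]
        have hb0 := brk_pos one_pos x
        have h1 : ‖x‖ ^ d * (brk 1 x ^ (d + 1))⁻¹ ≤ 1 := by
          rw [← div_eq_mul_inv, div_le_one (by positivity)]
          calc ‖x‖ ^ d ≤ brk 1 x ^ d := by gcongr; exact norm_le_brk zero_le_one x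
            _ ≤ brk 1 x ^ (d + 1) := pow_le_pow_right₀ (one_le_brk le_rfl x) (by omega)
        nlinarith
    have hmeas : Measurable
        (fun x : EuclideanSpace ℝ (Fin d) => C₂ * μ * (brk 1 x ^ (d + 1))⁻¹) := by
      have := (continuous_brk (d := d) (t := 1)).measurable
      fun_prop
    refine (Bnorm_le_add hmeas (fun x => ?_)).trans ((add_le_add hA hB).trans ?_)
    · refine (hC₂ ρ hc hrot (rho_le_brk hρ) hzero μ h0 h1 x).trans ?_
      refine add_le_add (le_abs_self _) (le_trans (le_of_eq ?_) (le_abs_self _))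
      rw [← tsum_mul_left]
      exact tsum_congr fun n => by ring
    · rw [← ENNReal.ofReal_add (by positivity) (by positivity)]
      refine ENNReal.ofReal_le_ofReal ?_
      have : C₁ * (C₂ * S) ≤ C₁ * (C₂ * (2 * μ)) := by gcongr
      linarith
end

section
/- Let d ≥ 1, m ∈ ℕ and h > 0. There exists a constant C = C(m,h,d) > 0 such that for all y ∈ ℝ^d: (1/C) · (1+|y|)^{−m} ≤ ∫_{ℝ^d} (1+|x|)^{−m} e^{−h|y−x|²} dx ≤ C · (1+|y|)^{−m}. -/
open MeasureTheory

/-!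
After the substitution `u = y - x` the integral is `∫ (1 + ‖y - u‖) ^ (-m) * exp (-h * ‖u‖ ^ 2)`.
Peetre's inequality `1 + ‖a + b‖ ≤ (1 + ‖a‖) * (1 + ‖b‖)`, applied to `y = (y - u) + u` and to
`y - u = y + (-u)`, bounds the weight from both sides:
`(1 + ‖y‖) ^ (-m) * (1 + ‖u‖) ^ (-m) ≤ (1 + ‖y - u‖) ^ (-m) ≤ (1 + ‖y‖) ^ (-m) * (1 + ‖u‖) ^ m`.
Hence the integral lies between `B * (1 + ‖y‖) ^ (-m)` and `A * (1 + ‖y‖) ^ (-m)`, where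
`A = ∫ (1 + ‖u‖) ^ m * exp (-h * ‖u‖ ^ 2)` is finite (`integrable_pow_mul_gaussian`) and
`B = ∫ (1 + ‖u‖) ^ (-m) * exp (-h * ‖u‖ ^ 2)` is positive, so `C = A + B⁻¹` works.
-/

/-- Peetre's inequality for the weight `1 + ‖·‖`. -/
lemma one_add_norm_add_le {E : Type*} [SeminormedAddCommGroup E] (a b : E) :
    1 + ‖a + b‖ ≤ (1 + ‖a‖) * (1 + ‖b‖) := by
  nlinarith [norm_add_le a b, mul_nonneg (norm_nonneg a) (norm_nonneg b)]

lemma integrable_gaussian {d : ℕ} {c : ℝ} (hc : 0 < c) :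
    Integrable (fun u : EuclideanSpace ℝ (Fin d) => Real.exp (-c * ‖u‖ ^ 2)) := by
  have h := (GaussianFourier.integrable_cexp_neg_mul_sq_norm_add_of_euclideanSpace
    (b := (c : ℂ)) (by simpa using hc) 0 (0 : EuclideanSpace ℝ (Fin d))).norm
  refine h.congr (Filter.Eventually.of_forall fun u => ?_)
  simp only [Complex.norm_exp]
  norm_cast
  simp

/-- The polynomial factor is absorbed by half of the Gaussian: `(1 + t) ^ m ≤ m! * exp (1 + t)`
and `t ≤ h / 2 * t ^ 2 + 1 / (2 * h)`. -/
lemma integrable_pow_mul_gaussian {d : ℕ} (m : ℕ) {h : ℝ} (hh : 0 < h) :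
    Integrable (fun u : EuclideanSpace ℝ (Fin d) =>
      (1 + ‖u‖) ^ m * Real.exp (-h * ‖u‖ ^ 2)) := by
  refine ((integrable_gaussian (d := d) (half_pos hh)).const_mul
    (m.factorial * Real.exp (1 + 1 / (2 * h)))).mono' (by fun_prop) ?_
  refine Filter.Eventually.of_forall fun u => ?_
  have ht := norm_nonneg u
  set t := ‖u‖
  rw [Real.norm_of_nonneg (by positivity)]
  have h1 : (1 + t) ^ m ≤ m.factorial * Real.exp (1 + t) := by
    have := Real.pow_div_factorial_le_exp (1 + t) (by positivity) m
    rwa [div_le_iff₀' (by positivity)] at this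
  have h2 : t ≤ h / 2 * t ^ 2 + 1 / (2 * h) := by
    have e : h / 2 * t ^ 2 + 1 / (2 * h) - t = (h * t - 1) ^ 2 / (2 * h) := by
      field_simp
      ring
    have : 0 ≤ (h * t - 1) ^ 2 / (2 * h) := by positivity
    linarith
  calc (1 + t) ^ m * Real.exp (-h * t ^ 2)
      ≤ m.factorial * Real.exp (1 + t) * Real.exp (-h * t ^ 2) := by gcongr
    _ = m.factorial * Real.exp (1 + t + -h * t ^ 2) := by rw [Real.exp_add (1 + t)]; ring
    _ ≤ m.factorial * Real.exp (1 + 1 / (2 * h) + -(h / 2) * t ^ 2) := by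
        gcongr m.factorial * Real.exp ?_
        linarith
    _ = _ := by rw [Real.exp_add (1 + 1 / (2 * h))]; ring

theorem stmt10 (d : ℕ) (hd : 1 ≤ d) (m : ℕ) (h : ℝ) (hh : 0 < h) :
    ∃ C : ℝ, 0 < C ∧ ∀ y : EuclideanSpace ℝ (Fin d),
      C⁻¹ * (1 + ‖y‖) ^ (-(m : ℝ)) ≤
        (∫ x : EuclideanSpace ℝ (Fin d),
          (1 + ‖x‖) ^ (-(m : ℝ)) * Real.exp (-h * ‖y - x‖ ^ 2)) ∧
      (∫ x : EuclideanSpace ℝ (Fin d),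
          (1 + ‖x‖) ^ (-(m : ℝ)) * Real.exp (-h * ‖y - x‖ ^ 2)) ≤
        C * (1 + ‖y‖) ^ (-(m : ℝ)) := by
  have hw (x : EuclideanSpace ℝ (Fin d)) : (1 + ‖x‖) ^ (-(m : ℝ)) = ((1 + ‖x‖) ^ m)⁻¹ := by
    rw [Real.rpow_neg (by positivity), Real.rpow_natCast]
  simp only [hw]
  have hI (y : EuclideanSpace ℝ (Fin d)) : Integrable (fun u : EuclideanSpace ℝ (Fin d) =>
      ((1 + ‖y - u‖) ^ m)⁻¹ * Real.exp (-h * ‖u‖ ^ 2)) := by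
    refine (integrable_gaussian hh).mono' ?_ (Filter.Eventually.of_forall fun u => ?_)
    · refine Continuous.aestronglyMeasurable (Continuous.mul (Continuous.inv₀ (by fun_prop) ?_)
        (by fun_prop))
      intro u
      positivity
    · rw [Real.norm_of_nonneg (by positivity)]
      refine mul_le_of_le_one_left (by positivity) (inv_le_one_of_one_le₀ (one_le_pow₀ ?_))
      linarith [norm_nonneg (y - u)]
  have hA := integrable_pow_mul_gaussian (d := d) m hh
  have hB : Integrable (fun u : EuclideanSpace ℝ (Fin d) =>
      ((1 + ‖u‖) ^ m)⁻¹ * Real.exp (-h * ‖u‖ ^ 2)) := by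
    simpa using hI 0
  set A := ∫ u : EuclideanSpace ℝ (Fin d), (1 + ‖u‖) ^ m * Real.exp (-h * ‖u‖ ^ 2) with hAdef
  set B := ∫ u : EuclideanSpace ℝ (Fin d), ((1 + ‖u‖) ^ m)⁻¹ * Real.exp (-h * ‖u‖ ^ 2) with hBdef
  have hA0 : 0 ≤ A := integral_nonneg fun u => by positivity
  have hB0 : 0 < B := by
    refine (integral_pos_iff_support_of_nonneg (fun u => by positivity) hB).2 ?_
    have hs : Function.support (fun u : EuclideanSpace ℝ (Fin d) =>
        ((1 + ‖u‖) ^ m)⁻¹ * Real.exp (-h * ‖u‖ ^ 2)) = Set.univ := by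
      refine Set.eq_univ_of_forall fun u => ?_
      rw [Function.mem_support]
      positivity
    rw [hs]
    exact isOpen_univ.measure_pos _ Set.univ_nonempty
  refine ⟨A + B⁻¹, by positivity, fun y => ?_⟩
  have hsub : (∫ x : EuclideanSpace ℝ (Fin d), ((1 + ‖x‖) ^ m)⁻¹ * Real.exp (-h * ‖y - x‖ ^ 2)) =
      ∫ u : EuclideanSpace ℝ (Fin d), ((1 + ‖y - u‖) ^ m)⁻¹ * Real.exp (-h * ‖u‖ ^ 2) := by
    rw [← integral_sub_left_eq_self _ volume y]
    simp only [sub_sub_cancel]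
  rw [hsub]
  constructor
  · calc (A + B⁻¹)⁻¹ * ((1 + ‖y‖) ^ m)⁻¹ ≤ B * ((1 + ‖y‖) ^ m)⁻¹ := by
          gcongr
          exact inv_le_of_inv_le₀ hB0 (by linarith)
      _ = ∫ u : EuclideanSpace ℝ (Fin d),
            ((1 + ‖u‖) ^ m)⁻¹ * Real.exp (-h * ‖u‖ ^ 2) * ((1 + ‖y‖) ^ m)⁻¹ := by
          rw [integral_mul_const]
      _ ≤ _ := by
          refine integral_mono (hB.mul_const _) (hI y) fun u => ?_
          have hp : 1 + ‖y - u‖ ≤ (1 + ‖y‖) * (1 + ‖u‖) := by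
            simpa [sub_eq_add_neg] using one_add_norm_add_le y (-u)
          have hq : ((1 + ‖y‖) ^ m)⁻¹ * ((1 + ‖u‖) ^ m)⁻¹ ≤ ((1 + ‖y - u‖) ^ m)⁻¹ := by
            rw [← mul_inv, ← mul_pow]
            gcongr
          calc ((1 + ‖u‖) ^ m)⁻¹ * Real.exp (-h * ‖u‖ ^ 2) * ((1 + ‖y‖) ^ m)⁻¹
              = ((1 + ‖y‖) ^ m)⁻¹ * ((1 + ‖u‖) ^ m)⁻¹ * Real.exp (-h * ‖u‖ ^ 2) := by ring
            _ ≤ _ := by gcongr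
  · calc (∫ u : EuclideanSpace ℝ (Fin d), ((1 + ‖y - u‖) ^ m)⁻¹ * Real.exp (-h * ‖u‖ ^ 2))
        ≤ ∫ u : EuclideanSpace ℝ (Fin d),
            (1 + ‖u‖) ^ m * Real.exp (-h * ‖u‖ ^ 2) * ((1 + ‖y‖) ^ m)⁻¹ := by
          refine integral_mono (hI y) (hA.mul_const _) fun u => ?_
          have hp : 1 + ‖y‖ ≤ (1 + ‖y - u‖) * (1 + ‖u‖) := by
            simpa using one_add_norm_add_le (y - u) u
          have hq : ((1 + ‖y - u‖) ^ m)⁻¹ ≤ (1 + ‖u‖) ^ m * ((1 + ‖y‖) ^ m)⁻¹ := by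
            rw [← div_eq_mul_inv, le_div_iff₀ (by positivity), inv_mul_le_iff₀ (by positivity),
              ← mul_pow]
            gcongr
          calc ((1 + ‖y - u‖) ^ m)⁻¹ * Real.exp (-h * ‖u‖ ^ 2)
              ≤ (1 + ‖u‖) ^ m * ((1 + ‖y‖) ^ m)⁻¹ * Real.exp (-h * ‖u‖ ^ 2) := by gcongr
            _ = _ := by ring
      _ = A * ((1 + ‖y‖) ^ m)⁻¹ := by rw [integral_mul_const]
      _ ≤ (A + B⁻¹) * ((1 + ‖y‖) ^ m)⁻¹ := by
          gcongr
          have : 0 < B⁻¹ := by positivity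
          linarith
end

section
/- Let d ≥ 1, m₁, m₂ ∈ ℕ and h > 0. There exists a constant C = C(m₁,m₂,h,d) > 0 such that for all y₁, y₂ ∈ ℝ^d: ∫_{ℝ^d} (1+|y₁−x|)^{−m₁} (1+|y₂−x|)^{−m₂} e^{−h|x|²} dx ≤ C · (1+|y₁|)^{−m₁} (1+|y₂|)^{−m₂}. -/
/-!
Since `1 + ‖y‖ ≤ (1 + ‖y - x‖) (1 + ‖x‖)`, moving each weight from `y - x` to `y` costs a factor
`(1 + ‖x‖) ^ m` (`rpow_neg_weight_le`). The total loss `(1 + ‖x‖) ^ (m₁ + m₂)` is absorbed by half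
of the Gaussian exponent (`weight_mul_gaussian_le`), and the remaining Gaussian is integrable.
-/

open MeasureTheory

/-- Peetre's inequality, for the weight `1 + ‖·‖` and a nonpositive exponent. -/
lemma rpow_neg_weight_le {E : Type*} [SeminormedAddCommGroup E] (m : ℕ) (y x : E) :
    (1 + ‖y - x‖) ^ (-(m : ℝ)) ≤ (1 + ‖y‖) ^ (-(m : ℝ)) * (1 + ‖x‖) ^ m := by
  have hprod : 1 + ‖y‖ ≤ (1 + ‖y - x‖) * (1 + ‖x‖) := by
    have htri : ‖y‖ ≤ ‖y - x‖ + ‖x‖ := by simpa using norm_add_le (y - x) x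
    nlinarith [mul_nonneg (norm_nonneg (y - x)) (norm_nonneg x)]
  have hpow : (1 + ‖y‖) ^ m ≤ (1 + ‖y - x‖) ^ m * (1 + ‖x‖) ^ m := by
    rw [← mul_pow]
    gcongr
  rw [Real.rpow_neg (by positivity), Real.rpow_neg (by positivity), Real.rpow_natCast,
    Real.rpow_natCast, inv_mul_eq_div, inv_eq_one_div, div_le_div_iff₀ (by positivity)
    (by positivity)]
  linarith

/-- A polynomial factor costs only half of the Gaussian exponent, by `1 + t ≤ exp t` and
`n t ≤ n ^ 2 / (2 h) + h t ^ 2 / 2`. -/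
lemma weight_mul_gaussian_le (n : ℕ) {h t : ℝ} (hh : 0 < h) (ht : 0 ≤ t) :
    (1 + t) ^ n * Real.exp (-h * t ^ 2) ≤
      Real.exp ((n : ℝ) ^ 2 / (2 * h)) * Real.exp (-(h / 2) * t ^ 2) := by
  have hexp : (1 + t) ^ n ≤ Real.exp (n * t) := by
    rw [Real.exp_nat_mul]
    gcongr
    linarith [Real.add_one_le_exp t]
  have hyoung : (n : ℝ) * t ≤ (n : ℝ) ^ 2 / (2 * h) + h / 2 * t ^ 2 := by
    have hsq : (n : ℝ) ^ 2 / (2 * h) + h / 2 * t ^ 2 - n * t = (n - h * t) ^ 2 / (2 * h) := by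
      field_simp
      ring
    have : 0 ≤ ((n : ℝ) - h * t) ^ 2 / (2 * h) := by positivity
    linarith
  calc (1 + t) ^ n * Real.exp (-h * t ^ 2)
      ≤ Real.exp (n * t) * Real.exp (-h * t ^ 2) := by gcongr
    _ ≤ _ := by
      rw [← Real.exp_add, ← Real.exp_add, Real.exp_le_exp]
      linarith

theorem stmt11 (d : ℕ) (hd : 1 ≤ d) (m₁ m₂ : ℕ) (h : ℝ) (hh : 0 < h) :
    ∃ C : ℝ, 0 < C ∧ ∀ y₁ y₂ : EuclideanSpace ℝ (Fin d),
      (∫ x : EuclideanSpace ℝ (Fin d),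
          (1 + ‖y₁ - x‖) ^ (-(m₁ : ℝ)) * (1 + ‖y₂ - x‖) ^ (-(m₂ : ℝ)) *
            Real.exp (-h * ‖x‖ ^ 2)) ≤
        C * (1 + ‖y₁‖) ^ (-(m₁ : ℝ)) * (1 + ‖y₂‖) ^ (-(m₂ : ℝ)) := by
  have hpos : 0 < ∫ x : EuclideanSpace ℝ (Fin d), Real.exp (-(h / 2) * ‖x‖ ^ 2) := by
    rw [GaussianFourier.integral_rexp_neg_mul_sq_norm (half_pos hh)]
    positivity
  -- A nonzero Bochner integral certifies integrability.
  have hint : Integrable fun x : EuclideanSpace ℝ (Fin d) => Real.exp (-(h / 2) * ‖x‖ ^ 2) :=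
    Integrable.of_integral_ne_zero hpos.ne'
  set A := Real.exp (((m₁ + m₂ : ℕ) : ℝ) ^ 2 / (2 * h)) with hA
  refine ⟨A * ∫ x : EuclideanSpace ℝ (Fin d), Real.exp (-(h / 2) * ‖x‖ ^ 2), by positivity,
    fun y₁ y₂ => ?_⟩
  set w₁ := (1 + ‖y₁‖) ^ (-(m₁ : ℝ)) with hw₁
  set w₂ := (1 + ‖y₂‖) ^ (-(m₂ : ℝ)) with hw₂
  calc _ ≤ ∫ x : EuclideanSpace ℝ (Fin d), w₁ * w₂ * A * Real.exp (-(h / 2) * ‖x‖ ^ 2) := by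
        refine integral_mono_of_nonneg (.of_forall fun x => ?_) (hint.const_mul _)
          (.of_forall fun x => ?_)
        · simp only [Pi.zero_apply]
          positivity
        · calc (1 + ‖y₁ - x‖) ^ (-(m₁ : ℝ)) * (1 + ‖y₂ - x‖) ^ (-(m₂ : ℝ)) *
                Real.exp (-h * ‖x‖ ^ 2)
              ≤ w₁ * (1 + ‖x‖) ^ m₁ * (w₂ * (1 + ‖x‖) ^ m₂) * Real.exp (-h * ‖x‖ ^ 2) := by
                gcongr
                · exact rpow_neg_weight_le m₁ y₁ x
                · exact rpow_neg_weight_le m₂ y₂ x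
            _ = w₁ * w₂ * ((1 + ‖x‖) ^ (m₁ + m₂) * Real.exp (-h * ‖x‖ ^ 2)) := by ring
            _ ≤ w₁ * w₂ * (A * Real.exp (-(h / 2) * ‖x‖ ^ 2)) :=
                mul_le_mul_of_nonneg_left (weight_mul_gaussian_le (m₁ + m₂) hh (norm_nonneg x))
                  (by positivity)
            _ = _ := by ring
    _ = _ := by
        rw [integral_const_mul]
        ring
end

section
/- Let d ≥ 3 and set a_d := Γ(d/2 − 1)/(2 π^{d/2}), where Γ is the Gamma function. There exists a constant C < ∞ such that for all x ∈ ℝ^d with |x| ≥ 1: | G(x) − a_d |x|^{2−d} | ≤ C |x|^{−d−2}. -/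
/-- The Green function `G(x) = Σ_{n≥1} φ_n(x)`. -/
noncomputable def Gfun (d : ℕ) (x : EuclideanSpace ℝ (Fin d)) : ℝ :=
  ∑' n : ℕ, gaussK d ((n : ℝ) + 1) x

open MeasureTheory Set Filter Topology

/-- The profile `F_a(t) = t^{-a} e^{-c/t}`; its junk value at `t = 0` is `0` when `a ≠ 0`, which is
also the right limit there if `c > 0`. -/
noncomputable def invGam (a c t : ℝ) : ℝ := t ^ (-a) * Real.exp (-(c / t))

lemma invGam_zero {a : ℝ} (ha : 0 < a) (c : ℝ) : invGam a c 0 = 0 := by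
  simp [invGam, Real.zero_rpow (neg_ne_zero.mpr ha.ne')]

lemma invGam_nonneg (a c : ℝ) {t : ℝ} (ht : 0 ≤ t) : 0 ≤ invGam a c t := by
  unfold invGam; positivity

lemma invGam_succ (a c : ℝ) {t : ℝ} (ht : 0 < t) : invGam (a + 1) c t = invGam a c t / t := by
  unfold invGam
  rw [neg_add, Real.rpow_add ht, Real.rpow_neg_one]
  field_simp

lemma hasDerivAt_invGam (a c : ℝ) {t : ℝ} (ht : 0 < t) :
    HasDerivAt (invGam a c) (-a * invGam (a + 1) c t + c * invGam (a + 2) c t) t := by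
  have h1 : HasDerivAt (fun t : ℝ => t ^ (-a)) (-a * t ^ (-a - 1)) t :=
    Real.hasDerivAt_rpow_const (Or.inl ht.ne')
  have h2 : HasDerivAt (fun t : ℝ => -(c / t)) (c / t ^ 2) t := by
    have := ((hasDerivAt_inv ht.ne').const_mul c).neg
    refine this.congr_deriv ?_
    field_simp
  have h3 := h1.mul h2.exp
  refine h3.congr_deriv ?_
  rw [show a + 2 = a + 1 + 1 by ring, invGam_succ (a + 1) _ ht, invGam_succ a _ ht, invGam,
    Real.rpow_sub ht, Real.rpow_one]
  field_simp

lemma continuousOn_invGam {a c : ℝ} (ha : 0 < a) (hc : 0 < c) :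
    ContinuousOn (invGam a c) (Ici 0) := by
  intro t ht
  rcases eq_or_lt_of_le (show (0 : ℝ) ≤ t from ht) with h | h
  · subst h
    have hlim : Tendsto (invGam a c) (𝓝[>] 0) (𝓝 0) := by
      have h1 := (tendsto_rpow_mul_exp_neg_mul_atTop_nhds_zero a c hc).comp
        (tendsto_inv_nhdsGT_zero (𝕜 := ℝ))
      refine h1.congr' ?_
      filter_upwards [self_mem_nhdsWithin] with s hs
      have hs' : (0 : ℝ) < s := hs
      simp only [Function.comp, invGam]
      rw [Real.inv_rpow hs'.le, Real.rpow_neg hs'.le]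
      congr 2
      ring
    rw [← Ioi_insert, continuousWithinAt_insert_self]
    unfold ContinuousWithinAt
    rw [invGam_zero ha]
    exact hlim
  · exact (hasDerivAt_invGam a c h).continuousAt.continuousWithinAt

lemma invGam_eq_comp (a c : ℝ) {t : ℝ} (ht : 0 < t) :
    invGam a c t = (|(-1 : ℝ)| * t ^ ((-1 : ℝ) - 1)) •
      ((t ^ (-1 : ℝ)) ^ (a - 1 - 1) * Real.exp (-(c * t ^ (-1 : ℝ)))) := by
  rw [smul_eq_mul, ← Real.rpow_mul ht.le, abs_neg, abs_one, one_mul, ← mul_assoc,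
    ← Real.rpow_add ht, Real.rpow_neg_one, invGam, div_eq_mul_inv]
  congr 2
  ring

lemma integrableOn_invGam {a c : ℝ} (ha : 1 < a) (hc : 0 < c) :
    IntegrableOn (invGam a c) (Ioi 0) := by
  have h := integrableOn_rpow_mul_exp_neg_mul_rpow (p := 1) (s := a - 1 - 1) (b := c)
    (by linarith) one_pos hc
  have h2 := (integrableOn_Ioi_comp_rpow_iff
    (fun y : ℝ => y ^ (a - 1 - 1) * Real.exp (-(c * y))) (p := -1) (by norm_num)).mpr
    (by simpa [neg_mul] using h)
  refine h2.congr_fun (fun t ht => (invGam_eq_comp a c ht).symm) measurableSet_Ioi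

lemma integral_invGam {a c : ℝ} (ha : 1 < a) (hc : 0 < c) :
    ∫ t in Ioi 0, invGam a c t = c ^ (1 - a) * Real.Gamma (a - 1) := by
  have h2 := integral_comp_rpow_Ioi
    (fun y : ℝ => y ^ (a - 1 - 1) * Real.exp (-(c * y))) (p := -1) (by norm_num)
  rw [Real.integral_rpow_mul_exp_neg_mul_Ioi (by linarith) hc] at h2
  rw [setIntegral_congr_fun measurableSet_Ioi (fun t ht => invGam_eq_comp a c ht), h2,
    one_div, Real.inv_rpow hc.le, ← Real.rpow_neg hc.le, neg_sub]

/-- The first derivative of `invGam a c`. -/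
noncomputable def invGamD (a c t : ℝ) : ℝ := -a * invGam (a + 1) c t + c * invGam (a + 2) c t

/-- The second derivative of `invGam a c`. -/
noncomputable def invGamDD (a c t : ℝ) : ℝ :=
  a * (a + 1) * invGam (a + 2) c t - 2 * (a + 1) * c * invGam (a + 3) c t
    + c ^ 2 * invGam (a + 4) c t

/-- A majorant of the absolute value of the second derivative of `invGam a c`. -/
noncomputable def invGamMaj (a c t : ℝ) : ℝ :=
  a * (a + 1) * invGam (a + 2) c t + 2 * (a + 1) * c * invGam (a + 3) c t
    + c ^ 2 * invGam (a + 4) c t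

lemma hasDerivAt_invGamD (a c : ℝ) {t : ℝ} (ht : 0 < t) :
    HasDerivAt (invGamD a c) (invGamDD a c t) t := by
  have h := ((hasDerivAt_invGam (a + 1) c ht).const_mul (-a)).add
    ((hasDerivAt_invGam (a + 2) c ht).const_mul c)
  refine h.congr_deriv ?_
  rw [invGamDD, show a + 1 + 1 = a + 2 by ring, show a + 1 + 2 = a + 3 by ring,
    show a + 2 + 1 = a + 3 by ring, show a + 2 + 2 = a + 4 by ring]
  ring

lemma abs_invGamDD_le {a c t : ℝ} (ha : 0 < a) (hc : 0 < c) (ht : 0 ≤ t) :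
    |invGamDD a c t| ≤ invGamMaj a c t := by
  have h2 : 0 ≤ a * (a + 1) * invGam (a + 2) c t :=
    mul_nonneg (by positivity) (invGam_nonneg _ _ ht)
  have h3 : 0 ≤ 2 * (a + 1) * c * invGam (a + 3) c t :=
    mul_nonneg (by positivity) (invGam_nonneg _ _ ht)
  have h4 : 0 ≤ c ^ 2 * invGam (a + 4) c t :=
    mul_nonneg (by positivity) (invGam_nonneg _ _ ht)
  rw [abs_le, invGamDD, invGamMaj]
  constructor <;> linarith

lemma invGamMaj_nonneg {a c t : ℝ} (ha : 0 < a) (hc : 0 < c) (ht : 0 ≤ t) :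
    0 ≤ invGamMaj a c t := (abs_nonneg _).trans (abs_invGamDD_le ha hc ht)

lemma continuousOn_invGamD {a c : ℝ} (ha : 0 < a) (hc : 0 < c) :
    ContinuousOn (invGamD a c) (Ici 0) :=
  ((continuousOn_invGam (by linarith) hc).const_smul (-a)).add
    ((continuousOn_invGam (by linarith) hc).const_smul c)

lemma continuousOn_invGamDD {a c : ℝ} (ha : 0 < a) (hc : 0 < c) :
    ContinuousOn (invGamDD a c) (Ici 0) :=
  (((continuousOn_invGam (by linarith) hc).const_smul (a * (a + 1))).sub
    ((continuousOn_invGam (by linarith) hc).const_smul (2 * (a + 1) * c))).add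
    ((continuousOn_invGam (by linarith) hc).const_smul (c ^ 2))

lemma continuousOn_invGamMaj {a c : ℝ} (ha : 0 < a) (hc : 0 < c) :
    ContinuousOn (invGamMaj a c) (Ici 0) :=
  (((continuousOn_invGam (by linarith) hc).const_smul (a * (a + 1))).add
    ((continuousOn_invGam (by linarith) hc).const_smul (2 * (a + 1) * c))).add
    ((continuousOn_invGam (by linarith) hc).const_smul (c ^ 2))

lemma integrableOn_invGamMaj {a c : ℝ} (ha : 0 < a) (hc : 0 < c) :
    IntegrableOn (invGamMaj a c) (Ioi 0) :=
  (((integrableOn_invGam (by linarith) hc).const_mul (a * (a + 1))).add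
    ((integrableOn_invGam (by linarith) hc).const_mul (2 * (a + 1) * c))).add
    ((integrableOn_invGam (by linarith) hc).const_mul (c ^ 2))

/-- All three terms of the majorant scale like `c^{-1-a}`. -/
lemma integral_invGamMaj {a c : ℝ} (ha : 0 < a) (hc : 0 < c) :
    ∫ t in Ioi 0, invGamMaj a c t =
      (a * (a + 1) * Real.Gamma (a + 1) + 2 * (a + 1) * Real.Gamma (a + 2)
        + Real.Gamma (a + 3)) * c ^ (-1 - a) := by
  have i2 := (integrableOn_invGam (a := a + 2) (by linarith) hc).const_mul (a * (a + 1))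
  have i3 := (integrableOn_invGam (a := a + 3) (by linarith) hc).const_mul (2 * (a + 1) * c)
  have i4 := (integrableOn_invGam (a := a + 4) (by linarith) hc).const_mul (c ^ 2)
  unfold invGamMaj
  have i23 : IntegrableOn (fun t => a * (a + 1) * invGam (a + 2) c t +
      2 * (a + 1) * c * invGam (a + 3) c t) (Ioi 0) := i2.add i3
  rw [integral_add i23 i4, integral_add i2 i3, integral_const_mul, integral_const_mul,
    integral_const_mul, integral_invGam (by linarith) hc, integral_invGam (by linarith) hc,
    integral_invGam (by linarith) hc]
  have e3 : c ^ (1 - (a + 3)) = c ^ (-1 - a) / c := by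
    rw [show 1 - (a + 3) = (-1 - a) - 1 by ring, Real.rpow_sub hc, Real.rpow_one]
  have e4 : c ^ (1 - (a + 4)) = c ^ (-1 - a) / c ^ 2 := by
    rw [show 1 - (a + 4) = (-1 - a) - 2 by ring, Real.rpow_sub hc, Real.rpow_two]
  rw [e3, e4, show 1 - (a + 2) = -1 - a by ring, show a + 2 - 1 = a + 1 by ring,
    show a + 3 - 1 = a + 2 by ring, show a + 4 - 1 = a + 3 by ring]
  field_simp

/-- Trapezoidal rule on `[m, m+1]`. It follows from the identity
`∫ f + ∫ (t-m)(m+1-t)/2 f'' = (f(m) + f(m+1))/2`, whose kernel takes values in `[0, 1]`. -/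
lemma trapezoid_step {a c m : ℝ} (ha : 0 < a) (hc : 0 < c) (hm : 0 ≤ m) :
    |(invGam a c m + invGam a c (m + 1)) / 2 - ∫ t in m..(m + 1), invGam a c t| ≤
      ∫ t in m..(m + 1), invGamMaj a c t := by
  have hsub : Icc m (m + 1) ⊆ Ici 0 := fun t ht => hm.trans ht.1
  have hle : m ≤ m + 1 := by linarith
  have cF := (continuousOn_invGam ha hc).mono hsub
  have cD := (continuousOn_invGamD ha hc).mono hsub
  have cDD := (continuousOn_invGamDD ha hc).mono hsub
  have cM := (continuousOn_invGamMaj ha hc).mono hsub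
  have cK : ContinuousOn (fun t => (t - m) * (m + 1 - t) / 2 * invGamDD a c t)
      (Icc m (m + 1)) := ContinuousOn.mul (by fun_prop) cDD
  have iF := cF.intervalIntegrable_of_Icc (μ := volume) hle
  have iK := cK.intervalIntegrable_of_Icc (μ := volume) hle
  have key := intervalIntegral.integral_eq_sub_of_hasDerivAt_of_le hle
    (f := fun t => (t - m - 1 / 2) * invGam a c t + (t - m) * (m + 1 - t) / 2 * invGamD a c t)
    (f' := fun t => invGam a c t + (t - m) * (m + 1 - t) / 2 * invGamDD a c t)
    ((ContinuousOn.mul (by fun_prop) cF).add (ContinuousOn.mul (by fun_prop) cD))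
    (by
      intro t ht
      have ht0 : 0 < t := lt_of_le_of_lt hm ht.1
      have p1 : HasDerivAt (fun t : ℝ => t - m - 1 / 2) 1 t :=
        ((hasDerivAt_id t).sub_const m).sub_const _
      have p2 : HasDerivAt (fun t : ℝ => (t - m) * (m + 1 - t) / 2)
          ((1 * (m + 1 - t) + (t - m) * (-1)) / 2) t :=
        (((hasDerivAt_id t).sub_const m).mul ((hasDerivAt_id t).const_sub (m + 1))).div_const 2
      have hF : HasDerivAt (invGam a c) (invGamD a c t) t := hasDerivAt_invGam a c ht0
      refine ((p1.mul hF).add (p2.mul (hasDerivAt_invGamD a c ht0))).congr_deriv ?_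
      ring)
    (iF.add iK)
  rw [intervalIntegral.integral_add iF iK] at key
  have e : (invGam a c m + invGam a c (m + 1)) / 2 - ∫ t in m..(m + 1), invGam a c t =
      ∫ t in m..(m + 1), (t - m) * (m + 1 - t) / 2 * invGamDD a c t := by
    ring_nf at key ⊢
    linarith
  rw [e, ← Real.norm_eq_abs]
  refine intervalIntegral.norm_integral_le_of_norm_le hle ?_
    (cM.intervalIntegrable_of_Icc (μ := volume) hle)
  refine Eventually.of_forall fun t ht => ?_
  have h1 : 0 ≤ (t - m) * (m + 1 - t) := mul_nonneg (by linarith [ht.1]) (by linarith [ht.2])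
  have h2 : (t - m) * (m + 1 - t) / 2 ≤ 1 := by nlinarith [sq_nonneg (t - m), ht.1, ht.2]
  rw [Real.norm_eq_abs, abs_mul, abs_of_nonneg (by positivity)]
  calc _ ≤ 1 * |invGamDD a c t| := by gcongr
    _ ≤ _ := by
      rw [one_mul]
      exact abs_invGamDD_le ha hc (by linarith [ht.1])

/-- Trapezoidal rule on `[0, N]`; the endpoint `0` contributes nothing as `F_a(0) = 0`. -/
lemma trapezoid_sum {a c : ℝ} (ha : 0 < a) (hc : 0 < c) (N : ℕ) :
    |(∑ n ∈ Finset.range N, invGam a c ((n : ℝ) + 1)) - invGam a c N / 2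
        - ∫ t in (0 : ℝ)..N, invGam a c t| ≤ ∫ t in (0 : ℝ)..N, invGamMaj a c t := by
  have ii : ∀ f : ℝ → ℝ, ContinuousOn f (Ici 0) → ∀ u v : ℝ, 0 ≤ u → u ≤ v →
      IntervalIntegrable f volume u v := fun f hf u v hu huv =>
    (hf.mono fun t ht => hu.trans ht.1).intervalIntegrable_of_Icc huv
  induction N with
  | zero => simp [invGam_zero ha]
  | succ N ih =>
    have hN : (0 : ℝ) ≤ N := N.cast_nonneg
    have hN1 : (N : ℝ) ≤ N + 1 := by linarith
    have cF := continuousOn_invGam ha hc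
    have cM := continuousOn_invGamMaj ha hc
    have step := trapezoid_step ha hc hN
    push_cast
    rw [Finset.sum_range_succ,
      ← intervalIntegral.integral_add_adjacent_intervals (ii _ cF 0 N le_rfl hN)
        (ii _ cF N (N + 1) hN hN1),
      ← intervalIntegral.integral_add_adjacent_intervals (ii _ cM 0 N le_rfl hN)
        (ii _ cM N (N + 1) hN hN1)]
    rw [abs_le] at *
    constructor <;> linarith [ih.1, ih.2, step.1, step.2]

lemma summable_invGam {a c : ℝ} (ha : 1 < a) (hc : 0 < c) :
    Summable fun n : ℕ => invGam a c n := by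
  refine Summable.of_nonneg_of_le (fun n => invGam_nonneg _ _ n.cast_nonneg) (fun n => ?_)
    (Real.summable_nat_rpow.mpr (show -a < -1 by linarith))
  unfold invGam
  refine mul_le_of_le_one_right (by positivity) (Real.exp_le_one_iff.mpr ?_)
  have : 0 ≤ c / (n : ℝ) := by positivity
  linarith

lemma tsum_invGam_sub_integral_le {a c : ℝ} (ha : 1 < a) (hc : 0 < c) :
    |(∑' n : ℕ, invGam a c ((n : ℝ) + 1)) - ∫ t in Ioi 0, invGam a c t| ≤
      ∫ t in Ioi 0, invGamMaj a c t := by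
  have ha0 : 0 < a := by linarith
  have hs := summable_invGam ha hc
  have hs1 : Summable fun n : ℕ => invGam a c ((n : ℝ) + 1) := by
    have := (summable_nat_add_iff 1).mpr hs
    simpa using this
  have t1 := hs1.hasSum.tendsto_sum_nat
  have t2 := hs.tendsto_atTop_zero.div_const 2
  have t3 := intervalIntegral_tendsto_integral_Ioi 0 (integrableOn_invGam ha hc)
    (tendsto_natCast_atTop_atTop (R := ℝ))
  have t4 := intervalIntegral_tendsto_integral_Ioi 0 (integrableOn_invGamMaj ha0 hc)
    (tendsto_natCast_atTop_atTop (R := ℝ))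
  have t := ((t1.sub t2).sub t3).abs
  rw [zero_div, sub_zero] at t
  exact le_of_tendsto_of_tendsto' t t4 (trapezoid_sum ha0 hc)

lemma gaussK_eq_invGam (d : ℕ) {t : ℝ} (ht : 0 ≤ t) (x : EuclideanSpace ℝ (Fin d)) :
    gaussK d t x = (2 * Real.pi) ^ (-((d : ℝ) / 2)) * invGam ((d : ℝ) / 2) (‖x‖ ^ 2 / 2) t := by
  rw [gaussK, invGam, Real.mul_rpow (by positivity) ht, neg_div, mul_assoc]
  congr 3
  rw [div_div, neg_div]

theorem stmt12 (d : ℕ) (hd : 3 ≤ d) :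
    ∃ C : ℝ, ∀ x : EuclideanSpace ℝ (Fin d), 1 ≤ ‖x‖ →
      |Gfun d x - (Real.Gamma ((d : ℝ) / 2 - 1) / (2 * Real.pi ^ ((d : ℝ) / 2))) *
          ‖x‖ ^ ((2 : ℝ) - d)| ≤
        C * ‖x‖ ^ (-(d : ℝ) - 2) := by
  have hd' : (3 : ℝ) ≤ d := by exact_mod_cast hd
  obtain ⟨a, hda⟩ : ∃ a : ℝ, a = (d : ℝ) / 2 := ⟨_, rfl⟩
  have hd2 : (d : ℝ) = 2 * a := by linarith
  have ha : 1 < a := by linarith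
  refine ⟨(2 * Real.pi) ^ (-a) * ((a * (a + 1) * Real.Gamma (a + 1)
    + 2 * (a + 1) * Real.Gamma (a + 2) + Real.Gamma (a + 3)) * 2 ^ (1 + a)), fun x hx => ?_⟩
  have hr : 0 < ‖x‖ := by linarith
  have hc : 0 < ‖x‖ ^ 2 / 2 := by positivity
  have hG : Gfun d x =
      (2 * Real.pi) ^ (-a) * ∑' n : ℕ, invGam a (‖x‖ ^ 2 / 2) ((n : ℝ) + 1) := by
    rw [Gfun, ← tsum_mul_left]
    refine tsum_congr fun n => ?_
    rw [gaussK_eq_invGam d (by positivity), hda]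
  have hpow : ∀ s : ℝ, (‖x‖ ^ 2 / 2) ^ s = ‖x‖ ^ (2 * s) * 2 ^ (-s) := fun s => by
    rw [Real.div_rpow (by positivity) (by norm_num), ← Real.rpow_natCast, ← Real.rpow_mul hr.le,
      Real.rpow_neg (by norm_num)]
    norm_num [div_eq_mul_inv]
  have hmain : Real.Gamma (a - 1) / (2 * Real.pi ^ a) * ‖x‖ ^ (2 - 2 * a) =
      (2 * Real.pi) ^ (-a) * ∫ t in Ioi 0, invGam a (‖x‖ ^ 2 / 2) t := by
    rw [integral_invGam ha hc, hpow, Real.mul_rpow (by norm_num) Real.pi_pos.le,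
      Real.rpow_neg Real.pi_pos.le, Real.rpow_neg (by norm_num), neg_sub,
      Real.rpow_sub (by norm_num) a 1, Real.rpow_one, show 2 * (1 - a) = 2 - 2 * a by ring]
    field_simp
  have hmaj := tsum_invGam_sub_integral_le ha hc
  rw [integral_invGamMaj (by linarith) hc, hpow, show 2 * (-1 - a) = -(2 * a) - 2 by ring,
    show -(-1 - a) = 1 + a by ring] at hmaj
  rw [← hda, hd2, hmain, hG, ← mul_sub, abs_mul, abs_of_pos (by positivity)]
  refine (mul_le_mul_of_nonneg_left hmaj (by positivity)).trans_eq ?_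
  ring
end

section
/- Let d ≥ 3. There exists a constant C_d < ∞ such that for every continuous function q : ℝ^d → [0,∞) with ∫_{ℝ^d} q(x) dx ≤ 1, sup_x q(x) ≤ 1 and sup_x |x|^d q(x) ≤ 1, one has (q ⋆ f_d)(x) ≤ C_d · f_d(x) for all x ∈ ℝ^d. -/
/-!
Put `R = 1 + |x|` and split the integral over `y` according to the size of `|x - y|`.

* If `|x - y| ≥ |x| / 2`, then `1 + |x - y| ≥ R / 2`, so `f_d (x - y) ≤ 2 ^ (d - 2) f_d x`, and
  this part contributes at most `2 ^ (d - 2) f_d x` because `∫ q ≤ 1`.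
* If `|x - y| < |x| / 2`, then `|y| > |x| / 2`, so `1 + |y| ≥ R / 2`. The two pointwise bounds on
  `q` give `(1 + |y|) ^ d q y ≤ 2 ^ d`, hence `q y ≤ 4 ^ d R ^ (-d)`. In polar coordinates the
  integral of `f_d` over the ball of radius `R` is at most `K R ^ 2`, where `K` is `d` times the
  volume of the unit ball (`integral_trunc_le`), so this part contributes at most
  `4 ^ d K R ^ (2 - d) = 4 ^ d K f_d x`.

The two cases are combined into one pointwise majorant of the integrand (`integrand_le`).
-/

open scoped ENNReal
open MeasureTheory

/-- `f_d(x) = (1+|x|)^{2−d}`. -/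
noncomputable def fd (d : ℕ) (x : EuclideanSpace ℝ (Fin d)) : ℝ :=
  (1 + ‖x‖) ^ ((2 : ℝ) - d)

/-- The radial profile `t ↦ (1 + t) ^ (-n)`, cut off at `t = R`; for `n = d - 2` it is the profile
of `f_d` restricted to the ball of radius `R`. -/
noncomputable def trunc (n : ℕ) (R : ℝ) : ℝ → ℝ :=
  (Set.Iio R).indicator fun t => ((1 + t) ^ n)⁻¹

lemma fd_add_two (n : ℕ) (x : EuclideanSpace ℝ (Fin (n + 2))) :
    fd (n + 2) x = ((1 + ‖x‖) ^ n)⁻¹ := by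
  have h : (2 : ℝ) - ((n + 2 : ℕ) : ℝ) = -(n : ℝ) := by push_cast; ring
  rw [fd, h, Real.rpow_neg (by positivity), Real.rpow_natCast]

lemma trunc_nonneg (n : ℕ) (R : ℝ) {t : ℝ} (ht : 0 ≤ t) : 0 ≤ trunc n R t := by
  unfold trunc
  exact Set.indicator_apply_nonneg fun _ => by positivity

lemma measurable_trunc (n : ℕ) (R : ℝ) : Measurable (trunc n R) :=
  Measurable.indicator (by fun_prop) measurableSet_Iio

lemma integrable_trunc (d n : ℕ) (R : ℝ) :
    Integrable (fun z : EuclideanSpace ℝ (Fin d) => trunc n R ‖z‖) := by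
  have hb : Integrable
      ((Metric.ball (0 : EuclideanSpace ℝ (Fin d)) R).indicator fun _ => (1 : ℝ)) :=
    (integrable_indicator_iff measurableSet_ball).2
      (integrableOn_const measure_ball_lt_top.ne)
  refine hb.mono' ((measurable_trunc n R).comp measurable_norm).aestronglyMeasurable
    (Filter.Eventually.of_forall fun z => ?_)
  rw [Real.norm_of_nonneg (trunc_nonneg n R (norm_nonneg z))]
  by_cases hz : ‖z‖ < R
  · have h1 : (1 : ℝ) ≤ (1 + ‖z‖) ^ n := one_le_pow₀ (by linarith [norm_nonneg z])
    simpa [trunc, hz] using inv_le_one_of_one_le₀ h1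
  · simp [trunc, hz]

/-- The radial density `t ^ (n + 1) (1 + t) ^ (-n)` is at most `t ≤ R` on `(0, R)`, so its integral
is at most `R ^ 2`. -/
lemma integral_trunc_le (n : ℕ) {R : ℝ} (hR : 0 ≤ R) :
    ∫ z : EuclideanSpace ℝ (Fin (n + 2)), trunc n R ‖z‖ ≤
      ((n + 2 : ℕ) : ℝ) *
        volume.real (Metric.ball (0 : EuclideanSpace ℝ (Fin (n + 2))) 1) * R ^ 2 := by
  rw [integral_fun_norm_addHaar, finrank_euclideanSpace_fin, nsmul_eq_mul, smul_eq_mul, mul_assoc]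
  gcongr
  have hI : IntegrableOn ((Set.Iio R).indicator fun _ => R) (Set.Ioi (0 : ℝ)) := by
    rw [IntegrableOn, integrable_indicator_iff measurableSet_Iio, IntegrableOn,
      Measure.restrict_restrict measurableSet_Iio]
    exact integrableOn_const (by rw [Set.inter_comm, Set.Ioi_inter_Iio]; simp)
  calc ∫ y in Set.Ioi (0 : ℝ), y ^ (n + 2 - 1) • trunc n R y
      ≤ ∫ y in Set.Ioi (0 : ℝ), (Set.Iio R).indicator (fun _ => R) y := by
        refine integral_mono_of_nonneg ?_ hI ?_
        · filter_upwards [ae_restrict_mem measurableSet_Ioi] with y hy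
          have hy0 : (0 : ℝ) ≤ y := le_of_lt hy
          exact mul_nonneg (by positivity) (trunc_nonneg n R hy0)
        · filter_upwards [ae_restrict_mem measurableSet_Ioi] with y hy
          have hy0 : (0 : ℝ) < y := hy
          by_cases hyR : y < R
          · simp only [trunc, Set.mem_Iio, hyR, Set.indicator_of_mem, smul_eq_mul]
            rw [← div_eq_mul_inv, div_le_iff₀ (by positivity)]
            calc y ^ (n + 2 - 1) = y * y ^ n := by
                  rw [show n + 2 - 1 = n + 1 by omega]; ring
              _ ≤ R * (1 + y) ^ n := by gcongr; linarith
          · simp [trunc, hyR]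
    _ = R ^ 2 := by
        rw [setIntegral_indicator measurableSet_Iio, Set.Ioi_inter_Iio]
        simp [hR, sq]

/-- The bounds `q ≤ 1` and `|y| ^ d q ≤ 1` control `(1 + |y|) ^ d q`. -/
lemma mul_pow_le {d : ℕ} {t s : ℝ} (ht : 0 ≤ t) (hs : 0 ≤ s) (h1 : s ≤ 1) (h2 : t ^ d * s ≤ 1) :
    (1 + t) ^ d * s ≤ 2 ^ d := by
  rcases le_total t 1 with h | h
  · calc (1 + t) ^ d * s ≤ 2 ^ d * 1 := by gcongr; linarith
      _ = 2 ^ d := mul_one _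
  · calc (1 + t) ^ d * s ≤ (2 * t) ^ d * s := by gcongr; linarith
      _ = 2 ^ d * (t ^ d * s) := by ring
      _ ≤ 2 ^ d * 1 := by gcongr
      _ = 2 ^ d := mul_one _

/-- Pointwise majorant of the integrand: the first term covers the `y` far from `x`, the second
the `y` close to `x`. -/
lemma integrand_le (n : ℕ) {q : EuclideanSpace ℝ (Fin (n + 2)) → ℝ} (h0 : ∀ x, 0 ≤ q x)
    (h1 : ∀ x, q x ≤ 1) (h2 : ∀ x, ‖x‖ ^ (n + 2) * q x ≤ 1)
    (x y : EuclideanSpace ℝ (Fin (n + 2))) :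
    q y * fd (n + 2) (x - y) ≤
      2 ^ n * ((1 + ‖x‖) ^ n)⁻¹ * q y +
        4 ^ (n + 2) * ((1 + ‖x‖) ^ (n + 2))⁻¹ * trunc n (1 + ‖x‖) ‖x - y‖ := by
  have hT := trunc_nonneg n (1 + ‖x‖) (norm_nonneg (x - y))
  have hq := h0 y
  rw [fd_add_two]
  rcases le_or_gt (‖x‖ / 2) ‖x - y‖ with h | h
  · have hf : ((1 + ‖x - y‖) ^ n)⁻¹ ≤ 2 ^ n * ((1 + ‖x‖) ^ n)⁻¹ := by
      calc ((1 + ‖x - y‖) ^ n)⁻¹ ≤ (((1 + ‖x‖) / 2) ^ n)⁻¹ := by gcongr; linarith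
        _ = 2 ^ n * ((1 + ‖x‖) ^ n)⁻¹ := by rw [div_pow, inv_div, div_eq_mul_inv]
    have hl : q y * ((1 + ‖x - y‖) ^ n)⁻¹ ≤ q y * (2 ^ n * ((1 + ‖x‖) ^ n)⁻¹) := by gcongr
    have hr : 0 ≤ 4 ^ (n + 2) * ((1 + ‖x‖) ^ (n + 2))⁻¹ * trunc n (1 + ‖x‖) ‖x - y‖ := by
      positivity
    linarith
  · have hy : ‖x‖ ≤ ‖x - y‖ + ‖y‖ := by simpa using norm_add_le (x - y) y
    have hlt : ‖x - y‖ < 1 + ‖x‖ := by linarith [norm_nonneg x]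
    have hb := mul_pow_le (norm_nonneg y) hq (h1 y) (h2 y)
    have hqy : q y ≤ 4 ^ (n + 2) * ((1 + ‖x‖) ^ (n + 2))⁻¹ := by
      rw [← div_eq_mul_inv, le_div_iff₀ (by positivity)]
      calc q y * (1 + ‖x‖) ^ (n + 2) ≤ q y * (2 * (1 + ‖y‖)) ^ (n + 2) := by
            gcongr; linarith
        _ = 2 ^ (n + 2) * ((1 + ‖y‖) ^ (n + 2) * q y) := by rw [mul_pow]; ring
        _ ≤ 2 ^ (n + 2) * 2 ^ (n + 2) := by gcongr
        _ = 4 ^ (n + 2) := by rw [← mul_pow]; norm_num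
    have ht : trunc n (1 + ‖x‖) ‖x - y‖ = ((1 + ‖x - y‖) ^ n)⁻¹ := by
      simp [trunc, hlt]
    rw [ht]
    have hl : q y * ((1 + ‖x - y‖) ^ n)⁻¹ ≤
        4 ^ (n + 2) * ((1 + ‖x‖) ^ (n + 2))⁻¹ * ((1 + ‖x - y‖) ^ n)⁻¹ := by gcongr
    have hr : 0 ≤ 2 ^ n * ((1 + ‖x‖) ^ n)⁻¹ * q y := by positivity
    linarith

theorem stmt13 (d : ℕ) (hd : 3 ≤ d) :
    ∃ C : ℝ, ∀ q : EuclideanSpace ℝ (Fin d) → ℝ,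
      Continuous q →
      (∀ x, 0 ≤ q x) →
      (∫⁻ x, ENNReal.ofReal (q x)) ≤ 1 →
      (∀ x, q x ≤ 1) →
      (∀ x, ‖x‖ ^ d * q x ≤ 1) →
      ∀ x : EuclideanSpace ℝ (Fin d),
        (∫ y, q y * fd d (x - y)) ≤ C * fd d x := by
  obtain ⟨n, rfl⟩ : ∃ n, d = n + 2 := ⟨d - 2, by omega⟩
  set K : ℝ := ((n + 2 : ℕ) : ℝ) *
    volume.real (Metric.ball (0 : EuclideanSpace ℝ (Fin (n + 2))) 1) with hK
  refine ⟨2 ^ n + 4 ^ (n + 2) * K, fun q hc h0 hmass h1 h2 x => ?_⟩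
  have hqi : Integrable q := by
    refine ⟨hc.aestronglyMeasurable, ?_⟩
    rw [hasFiniteIntegral_iff_ofReal (Filter.Eventually.of_forall h0)]
    exact hmass.trans_lt ENNReal.one_lt_top
  have hq1 : ∫ y, q y ≤ 1 := by
    rw [integral_eq_lintegral_of_nonneg_ae (Filter.Eventually.of_forall h0)
      hc.aestronglyMeasurable]
    exact ENNReal.toReal_le_of_le_ofReal zero_le_one (by simpa using hmass)
  have hti : Integrable (fun y => trunc n (1 + ‖x‖) ‖x - y‖) :=
    (integrable_trunc (n + 2) n (1 + ‖x‖)).comp_sub_left x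
  have hte : ∫ y, trunc n (1 + ‖x‖) ‖x - y‖ ≤ K * (1 + ‖x‖) ^ 2 := by
    rw [integral_sub_left_eq_self
      (fun z : EuclideanSpace ℝ (Fin (n + 2)) => trunc n (1 + ‖x‖) ‖z‖) volume x]
    exact integral_trunc_le n (by positivity)
  calc ∫ y, q y * fd (n + 2) (x - y)
      ≤ ∫ y, (2 ^ n * ((1 + ‖x‖) ^ n)⁻¹ * q y +
        4 ^ (n + 2) * ((1 + ‖x‖) ^ (n + 2))⁻¹ * trunc n (1 + ‖x‖) ‖x - y‖) := by
        refine integral_mono_of_nonneg (Filter.Eventually.of_forall fun y => ?_)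
          ((hqi.const_mul _).add (hti.const_mul _))
          (Filter.Eventually.of_forall fun y => integrand_le n h0 h1 h2 x y)
        have := h0 y
        simp only [fd_add_two, Pi.zero_apply]
        positivity
    _ = 2 ^ n * ((1 + ‖x‖) ^ n)⁻¹ * (∫ y, q y) +
        4 ^ (n + 2) * ((1 + ‖x‖) ^ (n + 2))⁻¹ * ∫ y, trunc n (1 + ‖x‖) ‖x - y‖ := by
        rw [integral_add (hqi.const_mul _) (hti.const_mul _), integral_const_mul,
          integral_const_mul]
    _ ≤ 2 ^ n * ((1 + ‖x‖) ^ n)⁻¹ * 1 +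
        4 ^ (n + 2) * ((1 + ‖x‖) ^ (n + 2))⁻¹ * (K * (1 + ‖x‖) ^ 2) := by gcongr
    _ = (2 ^ n + 4 ^ (n + 2) * K) * fd (n + 2) x := by
        rw [fd_add_two]
        have : (1 + ‖x‖) ≠ 0 := by positivity
        field_simp
        ring
end

section
/- Let d ≥ 5 and A > 0. There exists a constant C < ∞ such that for all z₂, z₃, z₅ ∈ ℝ^d: ∫_{ℝ^d} ∫_{ℝ^d} f_d(z₁) f_d(z₂−z₁) f_d(z₃−z₂) f_d(z₄−z₃) f_d(z₅−z₄) e^{−A|z₄−z₁|²} dz₁ dz₄ ≤ C · f_d(z₃) · f_d(z₅−z₂). -/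
/-!
The Gaussian factor forces `z₄` to be close to `z₁`. Since `fd d x ≤ fd d y * (1 + ‖x - y‖) ^ (d - 2)`
(`fd_le_fd_mul`), replacing `z₄` by `z₁` in the two factors `fd d (z₄ - z₃)`, `fd d (z₅ - z₄)` costs
a polynomial in `‖z₄ - z₁‖`, and the polynomial times the Gaussian is integrable
(`integrable_weight`). It remains to bound
`∫ fd d z₁ * fd d (z₁ - z₃) * fd d (z₂ - z₁) * fd d (z₅ - z₁) dz₁`.

By the triangle inequality, `fd d a * fd d b ≤ 2 ^ (d - 2) * fd d c * (fd d a + fd d b)` whenever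
`‖c‖ ≤ ‖a‖ + ‖b‖` (`fd_mul_fd_le`). Pairing `z₁` with `z₁ - z₃` and `z₂ - z₁` with `z₅ - z₁` extracts
the factors `fd d z₃` and `fd d (z₅ - z₂)`; the remaining product is bounded by the sum of the four
squares, each a translate or reflection of `fd d ^ 2`, which is integrable because `2 (d - 2) > d`
when `d ≥ 5` (`integrable_fd_sq`).
-/

open MeasureTheory

/-- `fd` in terms of a natural power; natural subtraction does not truncate as `2 ≤ d`. -/
lemma fd_eq {d : ℕ} (hd : 5 ≤ d) (x : EuclideanSpace ℝ (Fin d)) :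
    fd d x = ((1 + ‖x‖) ^ (d - 2))⁻¹ := by
  have h0 : 0 ≤ 1 + ‖x‖ := by positivity
  rw [fd, ← Real.rpow_natCast, ← Real.rpow_neg h0, Nat.cast_sub (by omega)]
  congr 1
  push_cast
  ring

lemma fd_nonneg (d : ℕ) (x : EuclideanSpace ℝ (Fin d)) : 0 ≤ fd d x := by
  unfold fd
  positivity

lemma fd_le_one {d : ℕ} (hd : 5 ≤ d) (x : EuclideanSpace ℝ (Fin d)) : fd d x ≤ 1 := by
  rw [fd_eq hd]
  exact inv_le_one_of_one_le₀ (one_le_pow₀ (by linarith [norm_nonneg x]))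

lemma fd_le_fd_mul {d : ℕ} (hd : 5 ≤ d) (x y : EuclideanSpace ℝ (Fin d)) :
    fd d x ≤ fd d y * (1 + ‖x - y‖) ^ (d - 2) := by
  rw [fd_eq hd, fd_eq hd, inv_mul_eq_div, inv_eq_one_div, div_le_div_iff₀ (by positivity)
    (by positivity), one_mul, ← mul_pow]
  refine pow_le_pow_left₀ (by positivity) ?_ _
  have h1 : ‖y‖ ≤ ‖x‖ + ‖x - y‖ := by
    simpa using norm_sub_le x (x - y)
  nlinarith [norm_nonneg x, norm_nonneg (x - y), mul_nonneg (norm_nonneg x) (norm_nonneg (x - y))]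

lemma fd_le_two_pow_mul {d : ℕ} (hd : 5 ≤ d) {a c : EuclideanSpace ℝ (Fin d)}
    (h : ‖c‖ ≤ 2 * ‖a‖) : fd d a ≤ 2 ^ (d - 2) * fd d c := by
  rw [fd_eq hd, fd_eq hd, ← div_eq_mul_inv, inv_eq_one_div, div_le_div_iff₀ (by positivity)
    (by positivity), one_mul, ← mul_pow]
  exact pow_le_pow_left₀ (by positivity) (by linarith) _

lemma fd_mul_fd_le {d : ℕ} (hd : 5 ≤ d) {a b c : EuclideanSpace ℝ (Fin d)}
    (h : ‖c‖ ≤ ‖a‖ + ‖b‖) : fd d a * fd d b ≤ 2 ^ (d - 2) * fd d c * (fd d a + fd d b) := by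
  have ha := fd_nonneg d a
  have hb := fd_nonneg d b
  have hc : 0 ≤ 2 ^ (d - 2) * fd d c := mul_nonneg (by positivity) (fd_nonneg d c)
  rcases le_total ‖a‖ ‖b‖ with hab | hab
  · have h1 : fd d b ≤ 2 ^ (d - 2) * fd d c := fd_le_two_pow_mul hd (by linarith)
    nlinarith [mul_le_mul_of_nonneg_left h1 ha, mul_nonneg hc hb]
  · have h1 : fd d a ≤ 2 ^ (d - 2) * fd d c := fd_le_two_pow_mul hd (by linarith)
    nlinarith [mul_le_mul_of_nonneg_left h1 hb, mul_nonneg hc ha]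

lemma integrable_fd_sq {d : ℕ} (hd : 5 ≤ d) :
    Integrable (fun x : EuclideanSpace ℝ (Fin d) => fd d x ^ 2) := by
  have hd' : (5 : ℝ) ≤ d := by exact_mod_cast hd
  have h := integrable_one_add_norm (E := EuclideanSpace ℝ (Fin d)) (μ := volume)
    (r := 2 * (d : ℝ) - 4) (by simp; linarith)
  refine h.congr (Filter.Eventually.of_forall fun x => ?_)
  have h0 : 0 ≤ 1 + ‖x‖ := by positivity
  simp only [fd]
  rw [← Real.rpow_natCast, ← Real.rpow_mul h0]
  congr 1
  push_cast
  ring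

/-- A Gaussian decays faster than any power of `1 + r`. -/
lemma pow_mul_gaussian_le {A : ℝ} (hA : 0 < A) (n : ℕ) {r : ℝ} (hr : 0 ≤ r) :
    (1 + r) ^ n * Real.exp (-A * r ^ 2) ≤ n.factorial * Real.exp (1 + 1 / (4 * A)) := by
  have h1 := Real.pow_div_factorial_le_exp (1 + r) (by linarith) n
  rw [div_le_iff₀ (by positivity)] at h1
  -- complete the square: `A * (r - 1 / (2 * A)) ^ 2 ≥ 0`
  have h2 : 1 + r + -A * r ^ 2 ≤ 1 + 1 / (4 * A) := by
    have : 1 / (4 * A) - (r + -A * r ^ 2) = A * (r - 1 / (2 * A)) ^ 2 := by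
      field_simp
      ring
    nlinarith [mul_nonneg hA.le (sq_nonneg (r - 1 / (2 * A)))]
  calc (1 + r) ^ n * Real.exp (-A * r ^ 2)
      ≤ (Real.exp (1 + r) * n.factorial) * Real.exp (-A * r ^ 2) := by gcongr
    _ = n.factorial * Real.exp (1 + r + -A * r ^ 2) := by
        rw [Real.exp_add (1 + r)]; ring
    _ ≤ _ := by gcongr

lemma integrable_weight (d m : ℕ) {A : ℝ} (hA : 0 < A) :
    Integrable (fun w : EuclideanSpace ℝ (Fin d) =>
      (1 + ‖w‖) ^ m * Real.exp (-A * ‖w‖ ^ 2)) := by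
  have h := (integrable_one_add_norm (E := EuclideanSpace ℝ (Fin d)) (μ := volume)
    (r := (d : ℝ) + 1) (by simp)).const_mul
      (((m + (d + 1)).factorial : ℝ) * Real.exp (1 + 1 / (4 * A)))
  refine h.mono' (by fun_prop) (Filter.Eventually.of_forall fun w => ?_)
  have h0 : 0 < 1 + ‖w‖ := by positivity
  have h1 := pow_mul_gaussian_le hA (m + (d + 1)) (norm_nonneg w)
  rw [Real.norm_of_nonneg (by positivity), Real.rpow_neg h0.le,
    show (d : ℝ) + 1 = ((d + 1 : ℕ) : ℝ) by push_cast; rfl, Real.rpow_natCast,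
    ← div_eq_mul_inv, le_div_iff₀ (by positivity)]
  calc _ = (1 + ‖w‖) ^ (m + (d + 1)) * Real.exp (-A * ‖w‖ ^ 2) := by rw [pow_add]; ring
    _ ≤ _ := h1

theorem stmt14 (d : ℕ) (hd : 5 ≤ d) (A : ℝ) (hA : 0 < A) :
    ∃ C : ℝ, ∀ z₂ z₃ z₅ : EuclideanSpace ℝ (Fin d),
      (∫ z₁ : EuclideanSpace ℝ (Fin d), ∫ z₄ : EuclideanSpace ℝ (Fin d),
          fd d z₁ * fd d (z₂ - z₁) * fd d (z₃ - z₂) * fd d (z₄ - z₃) * fd d (z₅ - z₄) *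
            Real.exp (-A * ‖z₄ - z₁‖ ^ 2)) ≤
        C * fd d z₃ * fd d (z₅ - z₂) := by
  set s := d - 2 with hs
  set h : EuclideanSpace ℝ (Fin d) → ℝ :=
    fun w => (1 + ‖w‖) ^ (s + s) * Real.exp (-A * ‖w‖ ^ 2) with hh
  have h_int : Integrable h := integrable_weight d (s + s) hA
  set K := ∫ w, h w with hK
  set J := ∫ x, fd d x ^ 2 with hJ
  refine ⟨K * 2 ^ s * 2 ^ s * (4 * J), fun z₂ z₃ z₅ => ?_⟩
  have hsq := integrable_fd_sq hd
  set Q : EuclideanSpace ℝ (Fin d) → ℝ := fun z => fd d z ^ 2 + fd d (z - z₃) ^ 2 +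
    fd d (z₂ - z) ^ 2 + fd d (z₅ - z) ^ 2 with hQ
  have i2 := hsq.comp_sub_right z₃
  have i3 := hsq.comp_sub_left z₂
  have i4 := hsq.comp_sub_left z₅
  have hQint : Integrable Q := ((hsq.add i2).add i3).add i4
  have hQJ : ∫ z, Q z = 4 * J := by
    have e1 : ∫ z, Q z = ((J + ∫ z, fd d (z - z₃) ^ 2) + ∫ z, fd d (z₂ - z) ^ 2)
        + ∫ z, fd d (z₅ - z) ^ 2 := by
      rw [hJ, ← integral_add hsq i2, ← integral_add (by exact hsq.add i2) i3,
        ← integral_add (by exact (hsq.add i2).add i3) i4]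
    rw [e1, integral_sub_right_eq_self (fun x => fd d x ^ 2) z₃,
      integral_sub_left_eq_self (fun x => fd d x ^ 2) volume z₂,
      integral_sub_left_eq_self (fun x => fd d x ^ 2) volume z₅]
    ring
  set c := 2 ^ s * fd d z₃ * (2 ^ s * fd d (z₅ - z₂)) with hc
  have hc0 : 0 ≤ c := by
    have := fd_nonneg d z₃
    have := fd_nonneg d (z₅ - z₂)
    positivity
  -- the four factors that remain once `z₄` has been replaced by `z₁`
  have four : ∀ z, fd d z * fd d (z - z₃) * (fd d (z₂ - z) * fd d (z₅ - z)) ≤ c * Q z := by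
    intro z
    have n1 := fd_nonneg d z
    have n2 := fd_nonneg d (z - z₃)
    have n3 := fd_nonneg d (z₂ - z)
    have n4 := fd_nonneg d (z₅ - z)
    have p1 : fd d z * fd d (z - z₃) ≤ 2 ^ s * fd d z₃ * (fd d z + fd d (z - z₃)) :=
      fd_mul_fd_le hd (by simpa using norm_sub_le z (z - z₃))
    have p2 : fd d (z₂ - z) * fd d (z₅ - z) ≤
        2 ^ s * fd d (z₅ - z₂) * (fd d (z₂ - z) + fd d (z₅ - z)) :=
      fd_mul_fd_le hd (by
        have := norm_sub_le (z₅ - z) (z₂ - z)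
        rw [sub_sub_sub_cancel_right] at this
        linarith)
    calc _ ≤ (2 ^ s * fd d z₃ * (fd d z + fd d (z - z₃))) *
          (2 ^ s * fd d (z₅ - z₂) * (fd d (z₂ - z) + fd d (z₅ - z))) :=
          mul_le_mul p1 p2 (mul_nonneg n3 n4) ((mul_nonneg n1 n2).trans p1)
      _ = c * ((fd d z + fd d (z - z₃)) * (fd d (z₂ - z) + fd d (z₅ - z))) := by
          rw [hc]; ring
      _ ≤ c * Q z := by
          refine mul_le_mul_of_nonneg_left ?_ hc0
          simp only [hQ]
          nlinarith [sq_nonneg (fd d z + fd d (z - z₃) - (fd d (z₂ - z) + fd d (z₅ - z))),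
            sq_nonneg (fd d z - fd d (z - z₃)), sq_nonneg (fd d (z₂ - z) - fd d (z₅ - z))]
  have nonneg : ∀ z₁ z₄, 0 ≤ fd d z₁ * fd d (z₂ - z₁) * fd d (z₃ - z₂) * fd d (z₄ - z₃) *
      fd d (z₅ - z₄) * Real.exp (-A * ‖z₄ - z₁‖ ^ 2) := by
    intro z₁ z₄
    have := fd_nonneg d z₁
    have := fd_nonneg d (z₂ - z₁)
    have := fd_nonneg d (z₃ - z₂)
    have := fd_nonneg d (z₄ - z₃)
    have := fd_nonneg d (z₅ - z₄)
    positivity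
  have point : ∀ z₁ z₄, fd d z₁ * fd d (z₂ - z₁) * fd d (z₃ - z₂) * fd d (z₄ - z₃) *
      fd d (z₅ - z₄) * Real.exp (-A * ‖z₄ - z₁‖ ^ 2) ≤ c * Q z₁ * h (z₄ - z₁) := by
    intro z₁ z₄
    have n1 := fd_nonneg d z₁
    have n2 := fd_nonneg d (z₂ - z₁)
    have n3 := fd_nonneg d (z₃ - z₂)
    have n4 := fd_nonneg d (z₄ - z₃)
    have n5 := fd_nonneg d (z₅ - z₄)
    have n6 := fd_nonneg d (z₁ - z₃)
    have n7 := fd_nonneg d (z₅ - z₁)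
    have q1 : fd d (z₄ - z₃) ≤ fd d (z₁ - z₃) * (1 + ‖z₄ - z₁‖) ^ s := by
      have := fd_le_fd_mul hd (z₄ - z₃) (z₁ - z₃)
      rwa [sub_sub_sub_cancel_right] at this
    have q2 : fd d (z₅ - z₄) ≤ fd d (z₅ - z₁) * (1 + ‖z₄ - z₁‖) ^ s := by
      have := fd_le_fd_mul hd (z₅ - z₄) (z₅ - z₁)
      rwa [sub_sub_sub_cancel_left, norm_sub_rev] at this
    have q3 := fd_le_one hd (z₃ - z₂)
    calc _ ≤ fd d z₁ * fd d (z₂ - z₁) * 1 * (fd d (z₁ - z₃) * (1 + ‖z₄ - z₁‖) ^ s) *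
          (fd d (z₅ - z₁) * (1 + ‖z₄ - z₁‖) ^ s) * Real.exp (-A * ‖z₄ - z₁‖ ^ 2) := by
          gcongr
      _ = fd d z₁ * fd d (z₁ - z₃) * (fd d (z₂ - z₁) * fd d (z₅ - z₁)) * h (z₄ - z₁) := by
          simp only [hh, pow_add]; ring
      _ ≤ _ := by
          refine mul_le_mul_of_nonneg_right (four z₁) ?_
          simp only [hh]
          positivity
  have inner_le : ∀ z₁, (∫ z₄ : EuclideanSpace ℝ (Fin d),
      fd d z₁ * fd d (z₂ - z₁) * fd d (z₃ - z₂) * fd d (z₄ - z₃) * fd d (z₅ - z₄) *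
        Real.exp (-A * ‖z₄ - z₁‖ ^ 2)) ≤ c * K * Q z₁ := by
    intro z₁
    refine (integral_mono_of_nonneg (Filter.Eventually.of_forall (nonneg z₁))
      ((h_int.comp_sub_right z₁).const_mul (c * Q z₁))
      (Filter.Eventually.of_forall (point z₁))).trans_eq ?_
    rw [integral_const_mul, integral_sub_right_eq_self h z₁]
    ring
  refine (integral_mono_of_nonneg
    (Filter.Eventually.of_forall fun z₁ => integral_nonneg (nonneg z₁))
    (hQint.const_mul (c * K)) (Filter.Eventually.of_forall inner_le)).trans_eq ?_
  rw [integral_const_mul, hQJ, hc]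
  ring
end

section
/- Let d ≥ 5 and A > 0. There exists a constant θ > 1 such that for every integer k ≥ 1 and every x ∈ ℝ^d: ∫_{ℝ^d} f_d(x−y)² e^{−(A/k)|y|²} dy ≤ θ^k · f_d(x)². -/
/-!
The triangle inequality gives `1 + |x| ≤ (1 + |x - y|) (1 + |y|)`, hence
`f_d(x - y)² ≤ f_d(x)² (1 + |y|)^{2d-4}`. It remains to bound
`∫ (1 + |y|)^{2d-4} exp(-(A/k)|y|²) dy` by `θ^k`. Since `s^M ≤ M! e^s` with
`s = (A/k)(1 + |y|²)`, the Gaussian factor is at most a constant times `k^{2d} (1 + |y|)^{-4d}`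
(`gaussian_le`), so the integrand is dominated by a constant times `k^{2d}` times the integrable
function `(1 + |y|)^{-(2d+4)}`. A polynomial in `k` is bounded by an exponential: again
`k^{2d} ≤ (2d)! e^k`.
-/

open MeasureTheory

theorem pow_le_factorial_mul_exp (M : ℕ) {s : ℝ} (hs : 0 ≤ s) :
    s ^ M ≤ M.factorial * Real.exp s := by
  have h := Real.pow_div_factorial_le_exp s hs M
  rwa [div_le_iff₀' (by positivity)] at h

/-- Polynomial decay of the Gaussian, with a constant growing at most exponentially in `k`. -/
theorem gaussian_le (M : ℕ) {A : ℝ} (hA : 0 < A) {k : ℕ} (hk : 1 ≤ k) {t : ℝ} :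
    (1 + t) ^ (2 * M) * Real.exp (-(A / k) * t ^ 2) ≤
      (2 / A) ^ M * (M.factorial : ℝ) ^ 2 * Real.exp A * Real.exp k := by
  have hk' : (1 : ℝ) ≤ k := by exact_mod_cast hk
  have hk0 : (0 : ℝ) < k := by linarith
  have h1 : (1 + t) ^ (2 * M) ≤ (2 / A) ^ M * (k : ℝ) ^ M * (A / k * (1 + t ^ 2)) ^ M := by
    rw [pow_mul, ← mul_pow, ← mul_pow]
    apply pow_le_pow_left₀ (sq_nonneg _)
    have : 2 / A * k * (A / k * (1 + t ^ 2)) = 2 * (1 + t ^ 2) := by field_simp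
    rw [this]
    nlinarith [sq_nonneg (1 - t)]
  have h2 := pow_le_factorial_mul_exp M (s := A / k * (1 + t ^ 2)) (by positivity)
  have h3 := pow_le_factorial_mul_exp M hk0.le
  have h4 : Real.exp (A / k * (1 + t ^ 2)) * Real.exp (-(A / k) * t ^ 2) ≤ Real.exp A := by
    rw [← Real.exp_add, Real.exp_le_exp]
    have : A / k ≤ A := div_le_self hA.le hk'
    linarith
  calc (1 + t) ^ (2 * M) * Real.exp (-(A / k) * t ^ 2)
      ≤ ((2 / A) ^ M * (M.factorial * Real.exp k) *
          (M.factorial * Real.exp (A / k * (1 + t ^ 2)))) * Real.exp (-(A / k) * t ^ 2) := by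
        gcongr
        exact h1.trans (by gcongr)
    _ = (2 / A) ^ M * (M.factorial : ℝ) ^ 2 * Real.exp k *
          (Real.exp (A / k * (1 + t ^ 2)) * Real.exp (-(A / k) * t ^ 2)) := by ring
    _ ≤ (2 / A) ^ M * (M.factorial : ℝ) ^ 2 * Real.exp k * Real.exp A := by gcongr
    _ = _ := by ring

theorem fd_sq_eq {d : ℕ} (hd : 2 ≤ d) (x : EuclideanSpace ℝ (Fin d)) :
    fd d x ^ 2 = ((1 + ‖x‖) ^ (2 * (d - 2)))⁻¹ := by
  have h : (2 : ℝ) - d = -((d - 2 : ℕ) : ℝ) := by push_cast [hd]; ring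
  rw [fd, h, Real.rpow_neg (by positivity), Real.rpow_natCast, inv_pow, ← pow_mul, mul_comm]

theorem fd_sub_sq_le {d : ℕ} (hd : 2 ≤ d) (x y : EuclideanSpace ℝ (Fin d)) :
    fd d (x - y) ^ 2 ≤ fd d x ^ 2 * (1 + ‖y‖) ^ (2 * (d - 2)) := by
  rw [fd_sq_eq hd, fd_sq_eq hd, inv_mul_eq_div, le_div_iff₀ (by positivity),
    inv_mul_le_iff₀ (by positivity), ← mul_pow]
  apply pow_le_pow_left₀ (by positivity)
  have h : ‖x‖ ≤ ‖x - y‖ + ‖y‖ := by simpa using norm_add_le (x - y) y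
  nlinarith [mul_nonneg (norm_nonneg (x - y)) (norm_nonneg y)]

theorem stmt15 (d : ℕ) (hd : 5 ≤ d) (A : ℝ) (hA : 0 < A) :
    ∃ θ : ℝ, 1 < θ ∧ ∀ k : ℕ, 1 ≤ k → ∀ x : EuclideanSpace ℝ (Fin d),
      (∫ y : EuclideanSpace ℝ (Fin d),
          fd d (x - y) ^ 2 * Real.exp (-(A / k) * ‖y‖ ^ 2)) ≤
        θ ^ k * fd d x ^ 2 := by
  set g : EuclideanSpace ℝ (Fin d) → ℝ := fun y => (1 + ‖y‖) ^ (-((2 * d + 4 : ℕ) : ℝ)) with hg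
  have hgi : Integrable g := by
    apply integrable_one_add_norm
    rw [finrank_euclideanSpace_fin]
    exact_mod_cast (by omega : d < 2 * d + 4)
  have hg0 : 0 ≤ ∫ y, g y := integral_nonneg fun y => by simp only [hg, Pi.zero_apply]; positivity
  set C : ℝ := (2 / A) ^ (2 * d) * ((2 * d).factorial : ℝ) ^ 2 * Real.exp A with hC
  have hC0 : 0 ≤ C := by positivity
  set B : ℝ := C * (∫ y, g y) + 1 with hB
  have hB1 : 1 ≤ B := by have := mul_nonneg hC0 hg0; linarith
  have he : 1 < Real.exp 1 := Real.one_lt_exp_iff.2 one_pos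
  refine ⟨B * Real.exp 1, by nlinarith, fun k hk x => ?_⟩
  have hpt : ∀ y, fd d (x - y) ^ 2 * Real.exp (-(A / k) * ‖y‖ ^ 2) ≤
      fd d x ^ 2 * (C * Real.exp k) * g y := fun y => by
    have hgy : g y = ((1 + ‖y‖) ^ (2 * d + 4))⁻¹ := by
      simp only [hg]
      rw [Real.rpow_neg (by positivity), Real.rpow_natCast]
    have hG := gaussian_le (2 * d) hA hk (t := ‖y‖)
    -- `4 d = (2 d - 4) + (2 d + 4)`
    have hsplit : 2 * (2 * d) = 2 * (d - 2) + (2 * d + 4) := by omega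
    rw [hsplit, pow_add] at hG
    rw [hgy, ← div_eq_mul_inv, le_div_iff₀ (by positivity)]
    calc _ ≤ fd d x ^ 2 * (1 + ‖y‖) ^ (2 * (d - 2)) * Real.exp (-(A / k) * ‖y‖ ^ 2) *
          (1 + ‖y‖) ^ (2 * d + 4) := by
          gcongr
          exact fd_sub_sq_le (by omega) x y
      _ = fd d x ^ 2 * ((1 + ‖y‖) ^ (2 * (d - 2)) * (1 + ‖y‖) ^ (2 * d + 4) *
          Real.exp (-(A / k) * ‖y‖ ^ 2)) := by ring
      _ ≤ _ := by gcongr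
  calc _ ≤ ∫ y, fd d x ^ 2 * (C * Real.exp k) * g y :=
        integral_mono_of_nonneg (.of_forall fun y => by simp only [Pi.zero_apply]; positivity)
          (hgi.const_mul _) (.of_forall hpt)
    _ = (C * ∫ y, g y) * Real.exp k * fd d x ^ 2 := by rw [integral_const_mul]; ring
    _ ≤ B ^ k * Real.exp k * fd d x ^ 2 := by
        gcongr
        exact (by linarith : C * ∫ y, g y ≤ B).trans (le_self_pow₀ hB1 (by omega))
    _ = (B * Real.exp 1) ^ k * fd d x ^ 2 := by
        rw [mul_pow, ← Real.exp_nat_mul, mul_one]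
end

section
/- Let d ≥ 5 and A > 0. There exists a constant C < ∞ such that for all x ∈ ℝ^d: ∫_{ℝ^d} ∫_{ℝ^d} exp[ −A( |z₂|² + |x−z₁|² ) ] f_d(z₁) f_d(z₂−z₁) f_d(x−z₂) dz₁ dz₂ ≤ C · (1+|x|)^{6−3d}. -/
/-!
The weight `1 + |·|` is submultiplicative, `1 + |a + b| ≤ (1 + |a|)(1 + |b|)`. Since `x` differs
from `z₁` by `x - z₁`, from `x - z₂` by `z₂`, and from `z₂ - z₁` by both, each of the three factors
`f_d` is at most `f_d(x)` times powers of `1 + |x - z₁|` and `1 + |z₂|` (`fd_le_mul_fd`).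
The integrand is therefore at most `f_d(x)³ g(x - z₁) g(z₂)`, where
`g(u) = exp(-A|u|²) (1 + |u|)^{2(d-2)}` is integrable (`integrable_gaussWeight`), and
`C = (∫ g)²` works.
-/

open MeasureTheory

/-- The Gaussian times the polynomial weight lost when every factor `f_d` is compared with
`f_d(x)`. -/
noncomputable def gaussWeight (d : ℕ) (A : ℝ) (u : EuclideanSpace ℝ (Fin d)) : ℝ :=
  Real.exp (-A * ‖u‖ ^ 2) * ((1 + ‖u‖) ^ ((d : ℝ) - 2)) ^ 2

lemma gaussWeight_nonneg (d : ℕ) (A : ℝ) (u : EuclideanSpace ℝ (Fin d)) :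
    0 ≤ gaussWeight d A u := by
  unfold gaussWeight; positivity

/-- A Gaussian beats every power: `(1+r)^m ≤ m! e^{1+r}` and `r - A r² ≤ 1/(4A)`. -/
lemma exp_neg_sq_mul_pow_le (A : ℝ) (hA : 0 < A) (m : ℕ) (r : ℝ) (hr : 0 ≤ r) :
    Real.exp (-A * r ^ 2) * (1 + r) ^ m ≤ m.factorial * Real.exp (1 + 1 / (4 * A)) := by
  have h1 : (1 + r) ^ m ≤ m.factorial * Real.exp (1 + r) := by
    have h := Real.pow_div_factorial_le_exp (1 + r) (by linarith) m
    rw [div_le_iff₀ (by positivity)] at h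
    linarith
  have h2 : -A * r ^ 2 + (1 + r) ≤ 1 + 1 / (4 * A) := by
    have h3 : 1 + 1 / (4 * A) - (-A * r ^ 2 + (1 + r)) = (2 * A * r - 1) ^ 2 / (4 * A) := by
      field_simp
      ring
    have h4 : 0 ≤ (2 * A * r - 1) ^ 2 / (4 * A) := by positivity
    linarith
  calc Real.exp (-A * r ^ 2) * (1 + r) ^ m
      ≤ Real.exp (-A * r ^ 2) * (m.factorial * Real.exp (1 + r)) := by gcongr
    _ = m.factorial * Real.exp (-A * r ^ 2 + (1 + r)) := by
      rw [Real.exp_add (-A * r ^ 2)]; ring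
    _ ≤ _ := by gcongr

lemma integrable_gaussWeight (d : ℕ) (A : ℝ) (hA : 0 < A) : Integrable (gaussWeight d A) := by
  have h0 : Integrable (fun u : EuclideanSpace ℝ (Fin d) =>
      ((3 * d).factorial * Real.exp (1 + 1 / (4 * A))) * (1 + ‖u‖) ^ (-((d : ℝ) + 1))) := by
    refine Integrable.const_mul (integrable_one_add_norm ?_) _
    rw [finrank_euclideanSpace_fin]
    linarith
  refine h0.mono' ?_ (Filter.Eventually.of_forall fun u => ?_)
  · apply Continuous.aestronglyMeasurable
    unfold gaussWeight
    refine Continuous.mul (by fun_prop) (Continuous.pow ?_ 2)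
    exact Continuous.rpow_const (by fun_prop) fun u => Or.inl (by positivity)
  · rw [Real.norm_of_nonneg (gaussWeight_nonneg d A u)]
    unfold gaussWeight
    have hp : (0 : ℝ) < 1 + ‖u‖ := by positivity
    -- Exponents: `2(d-2) ≤ 3d - (d+1)`.
    have h1 : ((1 + ‖u‖) ^ ((d : ℝ) - 2)) ^ 2
        ≤ (1 + ‖u‖) ^ (3 * d) * (1 + ‖u‖) ^ (-((d : ℝ) + 1)) := by
      rw [← Real.rpow_natCast, ← Real.rpow_mul hp.le, ← Real.rpow_natCast, ← Real.rpow_add hp]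
      apply Real.rpow_le_rpow_of_exponent_le
      · linarith [norm_nonneg u]
      · push_cast; linarith
    calc _ ≤ Real.exp (-A * ‖u‖ ^ 2) *
          ((1 + ‖u‖) ^ (3 * d) * (1 + ‖u‖) ^ (-((d : ℝ) + 1))) := by gcongr
      _ = (Real.exp (-A * ‖u‖ ^ 2) * (1 + ‖u‖) ^ (3 * d)) * (1 + ‖u‖) ^ (-((d : ℝ) + 1)) := by
        ring
      _ ≤ _ := mul_le_mul_of_nonneg_right
        (exp_neg_sq_mul_pow_le A hA _ _ (norm_nonneg u)) (by positivity)

/-- `f_d` changes under translation by at most a polynomial factor in the translation. -/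
lemma fd_le_mul_fd (d : ℕ) (hd : 2 ≤ d) (y z : EuclideanSpace ℝ (Fin d)) :
    fd d y ≤ (1 + ‖z‖) ^ ((d : ℝ) - 2) * fd d (y + z) := by
  unfold fd
  have hy : (0 : ℝ) < 1 + ‖y‖ := by positivity
  have hz : (0 : ℝ) < 1 + ‖z‖ := by positivity
  have hyz : (0 : ℝ) < 1 + ‖y + z‖ := by positivity
  have hd' : (0 : ℝ) ≤ (d : ℝ) - 2 := by
    have : (2 : ℝ) ≤ d := by exact_mod_cast hd
    linarith
  have h : (1 + ‖y + z‖) ^ ((d : ℝ) - 2)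
      ≤ (1 + ‖y‖) ^ ((d : ℝ) - 2) * (1 + ‖z‖) ^ ((d : ℝ) - 2) := by
    rw [← Real.mul_rpow hy.le hz.le]
    apply Real.rpow_le_rpow hyz.le _ hd'
    nlinarith [norm_add_le y z, norm_nonneg y, norm_nonneg z]
  rw [show (2 : ℝ) - d = -((d : ℝ) - 2) by ring, Real.rpow_neg hy.le, Real.rpow_neg hyz.le,
    ← div_eq_mul_inv, le_div_iff₀ (by positivity), inv_mul_le_iff₀ (by positivity)]
  exact h

lemma integrand_le_s18 (d : ℕ) (hd : 2 ≤ d) (A : ℝ) (x z₁ z₂ : EuclideanSpace ℝ (Fin d)) :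
    Real.exp (-A * (‖z₂‖ ^ 2 + ‖x - z₁‖ ^ 2)) * fd d z₁ * fd d (z₂ - z₁) * fd d (x - z₂)
      ≤ (fd d x ^ 3 * gaussWeight d A (x - z₁)) * gaussWeight d A z₂ := by
  have h1 := fd_le_mul_fd d hd z₁ (x - z₁)
  rw [add_sub_cancel] at h1
  have h2 := fd_le_mul_fd d hd (x - z₂) z₂
  rw [sub_add_cancel] at h2
  -- `f_d` is even, and `x = (z₁ - z₂) + (x - z₁) + z₂`.
  have h3 : fd d (z₂ - z₁) ≤ (1 + ‖x - z₁‖) ^ ((d : ℝ) - 2) *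
      ((1 + ‖z₂‖) ^ ((d : ℝ) - 2) * fd d x) := by
    have h4 := fd_le_mul_fd d hd (z₁ - z₂) (x - z₁)
    have h5 := fd_le_mul_fd d hd (z₁ - z₂ + (x - z₁)) z₂
    rw [show z₁ - z₂ + (x - z₁) + z₂ = x by abel] at h5
    have h6 : fd d (z₂ - z₁) = fd d (z₁ - z₂) := by unfold fd; rw [norm_sub_rev]
    rw [h6]
    exact h4.trans (by gcongr)
  have := fd_nonneg d x
  have := fd_nonneg d z₁
  have := fd_nonneg d (z₂ - z₁)
  have := fd_nonneg d (x - z₂)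
  calc _ ≤ Real.exp (-A * (‖z₂‖ ^ 2 + ‖x - z₁‖ ^ 2)) *
        ((1 + ‖x - z₁‖) ^ ((d : ℝ) - 2) * fd d x) *
        ((1 + ‖x - z₁‖) ^ ((d : ℝ) - 2) * ((1 + ‖z₂‖) ^ ((d : ℝ) - 2) * fd d x)) *
        ((1 + ‖z₂‖) ^ ((d : ℝ) - 2) * fd d x) := by gcongr
    _ = _ := by
      unfold gaussWeight
      rw [mul_add, Real.exp_add]
      ring

theorem stmt18 (d : ℕ) (hd : 5 ≤ d) (A : ℝ) (hA : 0 < A) :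
    ∃ C : ℝ, ∀ x : EuclideanSpace ℝ (Fin d),
      (∫ z₁ : EuclideanSpace ℝ (Fin d), ∫ z₂ : EuclideanSpace ℝ (Fin d),
          Real.exp (-A * (‖z₂‖ ^ 2 + ‖x - z₁‖ ^ 2)) *
            fd d z₁ * fd d (z₂ - z₁) * fd d (x - z₂)) ≤
        C * (1 + ‖x‖) ^ ((6 : ℝ) - 3 * d) := by
  refine ⟨(∫ u, gaussWeight d A u) ^ 2, fun x => ?_⟩
  have hg := integrable_gaussWeight d A hA
  have hnn : ∀ z₁ z₂ : EuclideanSpace ℝ (Fin d),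
      0 ≤ Real.exp (-A * (‖z₂‖ ^ 2 + ‖x - z₁‖ ^ 2)) *
        fd d z₁ * fd d (z₂ - z₁) * fd d (x - z₂) := fun z₁ z₂ =>
    mul_nonneg (mul_nonneg (mul_nonneg (Real.exp_nonneg _) (fd_nonneg _ _)) (fd_nonneg _ _))
      (fd_nonneg _ _)
  have hcube : fd d x ^ 3 = (1 + ‖x‖) ^ ((6 : ℝ) - 3 * d) := by
    unfold fd
    rw [← Real.rpow_natCast, ← Real.rpow_mul (by positivity)]
    congr 1
    push_cast
    ring
  -- Only the dominating functions need to be integrable, since the integrand is nonnegative.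
  have hinner : ∀ z₁ : EuclideanSpace ℝ (Fin d),
      (∫ z₂ : EuclideanSpace ℝ (Fin d), Real.exp (-A * (‖z₂‖ ^ 2 + ‖x - z₁‖ ^ 2)) *
        fd d z₁ * fd d (z₂ - z₁) * fd d (x - z₂))
      ≤ (fd d x ^ 3 * gaussWeight d A (x - z₁)) * ∫ u, gaussWeight d A u := fun z₁ => by
    rw [← integral_const_mul]
    exact integral_mono_of_nonneg (Filter.Eventually.of_forall (hnn z₁)) (hg.const_mul _)
      (Filter.Eventually.of_forall fun z₂ => integrand_le_s18 d (by omega) A x z₁ z₂)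
  calc _ ≤ ∫ z₁, (fd d x ^ 3 * gaussWeight d A (x - z₁)) * ∫ u, gaussWeight d A u :=
        integral_mono_of_nonneg
          (Filter.Eventually.of_forall fun z₁ => integral_nonneg (hnn z₁))
          (((hg.comp_sub_left x).const_mul _).mul_const _)
          (Filter.Eventually.of_forall hinner)
    _ = _ := by
      rw [integral_mul_const, integral_const_mul,
        integral_sub_left_eq_self (gaussWeight d A) volume x, hcube]
      ring
end
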